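/- arXiv:1608.02650 — 2 statements merged into one kernel-verified Lean document; each statement's English description precedes it below -/
import Mathlib

section
/- (No-local-broadcasting theorem) Let ρ_{AB} be a density matrix on H_A ⊗ H_B (finite-dimensional). There exist quantum channels Λ: A → A₁A₂ and Γ: B → B₁B₂ such that ρ̃ = (Λ ⊗ Γ)[ρ_{AB}] satisfies ρ̃_{A1B1} = ρ_{AB} and ρ̃_{A2B2} = ρ_{AB} (where ρ̃_{A1B1}, ρ̃_{A2B2} are the reduced states on the indicated pairs of subsystems) if and only if ρ_{AB} is classical-classical, i.e., ρ_{AB} = Σ_{ij} p_{ij} |a_i⟩⟨a_i| ⊗ |b_j⟩⟨b_j| for some probability distribution {p_{ij}} and orthonormal bases {|a_i⟩} of H_A and {|b_j⟩} of H_B. -/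
open Matrix Kronecker ComplexOrder

section Defs
variable {α α' β β' γ : Type*} [Fintype α] [DecidableEq α] [Fintype α'] [DecidableEq α']
  [Fintype β] [DecidableEq β] [Fintype β'] [DecidableEq β'] [Fintype γ] [DecidableEq γ]

/-- A density matrix: a positive semidefinite matrix with unit trace. -/
def IsDensityMatrix (ρ : Matrix β β ℂ) : Prop := ρ.PosSemidef ∧ ρ.trace = 1

/-- The map `id_α ⊗ Λ` induced on matrices over the product index type. -/
noncomputable def idTensor (Λ : Matrix β β ℂ →ₗ[ℂ] Matrix β' β' ℂ) :
    Matrix (α × β) (α × β) ℂ →ₗ[ℂ] Matrix (α × β') (α × β') ℂ where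
  toFun M := Matrix.of fun p q => Λ (Matrix.of fun b b' => M (p.1, b) (q.1, b')) p.2 q.2
  map_add' M N := by
    ext p q
    show Λ (Matrix.of fun b b' => (M + N) (p.1, b) (q.1, b')) p.2 q.2 = _
    have h : (Matrix.of fun b b' => (M + N) (p.1, b) (q.1, b')) =
        (Matrix.of fun b b' => M (p.1, b) (q.1, b')) +
          (Matrix.of fun b b' => N (p.1, b) (q.1, b')) := rfl
    rw [h, map_add]
    rfl
  map_smul' c M := by
    ext p q
    show Λ (Matrix.of fun b b' => (c • M) (p.1, b) (q.1, b')) p.2 q.2 = _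
    have h : (Matrix.of fun b b' => (c • M) (p.1, b) (q.1, b')) =
        c • (Matrix.of fun b b' => M (p.1, b) (q.1, b')) := rfl
    rw [h, _root_.map_smul]
    rfl

/-- The map `Λ ⊗ id_β` induced on matrices over the product index type. -/
noncomputable def tensorId (Λ : Matrix α α ℂ →ₗ[ℂ] Matrix α' α' ℂ) :
    Matrix (α × β) (α × β) ℂ →ₗ[ℂ] Matrix (α' × β) (α' × β) ℂ where
  toFun M := Matrix.of fun p q => Λ (Matrix.of fun a a' => M (a, p.2) (a', q.2)) p.1 q.1
  map_add' M N := by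
    ext p q
    show Λ (Matrix.of fun a a' => (M + N) (a, p.2) (a', q.2)) p.1 q.1 = _
    have h : (Matrix.of fun a a' => (M + N) (a, p.2) (a', q.2)) =
        (Matrix.of fun a a' => M (a, p.2) (a', q.2)) +
          (Matrix.of fun a a' => N (a, p.2) (a', q.2)) := rfl
    rw [h, map_add]
    rfl
  map_smul' c M := by
    ext p q
    show Λ (Matrix.of fun a a' => (c • M) (a, p.2) (a', q.2)) p.1 q.1 = _
    have h : (Matrix.of fun a a' => (c • M) (a, p.2) (a', q.2)) =
        c • (Matrix.of fun a a' => M (a, p.2) (a', q.2)) := rfl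
    rw [h, _root_.map_smul]
    rfl

/-- Complete positivity: all extensions `id ⊗ Λ` preserve positive semidefiniteness. -/
def IsCompletelyPositive (Λ : Matrix β β ℂ →ₗ[ℂ] Matrix β' β' ℂ) : Prop :=
  ∀ (k : ℕ) (M : Matrix (Fin k × β) (Fin k × β) ℂ), M.PosSemidef → (idTensor Λ M).PosSemidef

/-- A quantum channel: a completely positive trace-preserving linear map. -/
def IsQuantumChannel (Λ : Matrix β β ℂ →ₗ[ℂ] Matrix β' β' ℂ) : Prop :=
  IsCompletelyPositive Λ ∧ ∀ X, (Λ X).trace = X.trace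

/-- The reduced state on `A₁B₁` of a state of `(A₁A₂)(B₁B₂)`. -/
noncomputable def marg11 (M : Matrix ((α × α') × β × β') ((α × α') × β × β') ℂ) :
    Matrix (α × β) (α × β) ℂ :=
  Matrix.of fun p q => ∑ a₂, ∑ b₂, M ((p.1, a₂), (p.2, b₂)) ((q.1, a₂), (q.2, b₂))

/-- The reduced state on `A₂B₂` of a state of `(A₁A₂)(B₁B₂)`. -/
noncomputable def marg22 (M : Matrix ((α × α') × β × β') ((α × α') × β × β') ℂ) :
    Matrix (α' × β') (α' × β') ℂ :=
  Matrix.of fun p q => ∑ a₁, ∑ b₁, M ((a₁, p.1), (b₁, p.2)) ((a₁, q.1), (b₁, q.2))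

/-- A bipartite state is classical-classical if it is diagonal in a product of local
orthonormal bases: `ρ = ∑ᵢⱼ pᵢⱼ |aᵢ⟩⟨aᵢ| ⊗ |bⱼ⟩⟨bⱼ|`. -/
def ClassicalClassical (ρ : Matrix (α × β) (α × β) ℂ) : Prop :=
  ∃ (p : α → β → ℝ) (av : α → α → ℂ) (bv : β → β → ℂ),
    (∀ i j, 0 ≤ p i j) ∧ (∑ i, ∑ j, p i j = 1) ∧
    (∀ i i', star (av i) ⬝ᵥ av i' = if i = i' then 1 else 0) ∧
    (∀ j j', star (bv j) ⬝ᵥ bv j' = if j = j' then 1 else 0) ∧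
    ρ = ∑ i, ∑ j, (p i j : ℂ) •
      (vecMulVec (av i) (star (av i)) ⊗ₖ vecMulVec (bv j) (star (bv j)))

end Defs


section Core
variable {α γ : Type*} [Fintype α] [DecidableEq α] [Fintype γ] [DecidableEq γ]

lemma psd_factor {σ : Matrix α α ℂ} (h : σ.PosSemidef) : ∃ B : Matrix α α ℂ, σ = Bᴴ * B := by
  open scoped MatrixOrder in
  exact CStarAlgebra.nonneg_iff_eq_star_mul_self.mp h.nonneg

lemma trace_mul_psd_nonneg {σ N : Matrix α α ℂ} (h : σ.PosSemidef) (hN : N.PosSemidef) :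
    0 ≤ (σ * N).trace := by
  obtain ⟨B, rfl⟩ := psd_factor h
  rw [Matrix.mul_assoc, Matrix.trace_mul_comm]
  exact (hN.mul_mul_conjTranspose_same B).trace_nonneg

lemma mul_eq_zero_of_trace {σ A : Matrix α α ℂ} (h : σ.PosSemidef)
    (hA : (σ * (Aᴴ * A)).trace = 0) : A * σ = 0 := by
  obtain ⟨B, rfl⟩ := psd_factor h
  have : ((A * Bᴴ)ᴴ * (A * Bᴴ)).trace = 0 := by
    rw [← hA, Matrix.conjTranspose_mul, Matrix.conjTranspose_conjTranspose]
    rw [Matrix.mul_assoc Bᴴ, Matrix.trace_mul_comm Bᴴ]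
    simp only [Matrix.mul_assoc]
  rw [Matrix.trace_conjTranspose_mul_self_eq_zero_iff] at this
  rw [← Matrix.mul_assoc, this, Matrix.zero_mul]

lemma support_exists {σ : Matrix α α ℂ} (h : σ.PosSemidef) :
    ∃ p g : Matrix α α ℂ, p * p = p ∧ pᴴ = p ∧ σ * g = p ∧ g * σ = p ∧ g * p = g ∧ σ * p = σ
      ∧ p * σ = σ := by
  obtain ⟨U, V, d, hUV, hVU, hV, rfl⟩ : ∃ (U V : Matrix α α ℂ) (d : α → ℝ), U * V = 1 ∧ V * U = 1
      ∧ V = Uᴴ ∧ σ = U * diagonal (fun i => (d i : ℂ)) * V := by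
    refine ⟨h.1.eigenvectorUnitary, star h.1.eigenvectorUnitary, h.1.eigenvalues, ?_, ?_, rfl, ?_⟩
    · exact Unitary.coe_mul_star_self _
    · exact Unitary.coe_star_mul_self _
    · conv_lhs => rw [h.1.spectral_theorem]
      rfl
  have key : ∀ a b : α → ℂ, (U * diagonal a * V) * (U * diagonal b * V)
      = U * diagonal (fun i => a i * b i) * V := by
    intro a b
    calc _ = U * diagonal a * (V * U) * diagonal b * V := by simp only [Matrix.mul_assoc]
      _ = _ := by rw [hVU, Matrix.mul_one, Matrix.mul_assoc U, diagonal_mul_diagonal]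
  refine ⟨U * diagonal (fun i => if d i = 0 then 0 else 1) * V,
    U * diagonal (fun i => ((d i)⁻¹ : ℂ)) * V, ?_, ?_, ?_, ?_, ?_, ?_, ?_⟩
  · rw [key]; congr 3; ext i; split_ifs <;> simp
  · subst hV
    simp only [conjTranspose_mul, conjTranspose_conjTranspose, diagonal_conjTranspose, Matrix.mul_assoc]
    congr 3; ext i; simp [Pi.star_apply]
  all_goals
    rw [key]; congr 3; ext i; split_ifs with hd <;> simp [hd]

/-- Degenerate vectors of a positive form lie in the radical. -/
lemma pos_form_radical {E : Type*} [AddCommGroup E] [Module ℂ E] (d : E → E → ℂ)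
    (hadd : ∀ x y z, d (x + y) z = d x z + d y z) (hadd' : ∀ x y z, d z (x + y) = d z x + d z y)
    (hs : ∀ (c : ℂ) x y, d (c • x) y = star c * d x y) (hs' : ∀ (c : ℂ) x y, d x (c • y) = c * d x y)
    (hpos : ∀ x, 0 ≤ d x x) (hsymm : ∀ x y, d y x = star (d x y))
    {a : E} (ha : d a a = 0) (b : E) : d b a = 0 ∧ d a b = 0 := by
  have key : ∀ b, d b a = 0 := by
    intro b
    by_contra hne
    set z := d b a with hz
    have h1 : ∀ s : ℝ, 0 ≤ (d b b).re - 2 * s * Complex.normSq z := by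
      intro s
      have h := hpos (b + (-(s : ℂ) * star z) • a)
      rw [hadd, hadd', hadd', hs, hs, hs', hs', ha, hsymm b a, ← hz] at h
      have := (Complex.le_def.mp h).1
      simp [Complex.normSq_apply] at this ⊢
      nlinarith [this]
    have hp : 0 < Complex.normSq z := Complex.normSq_pos.mpr hne
    have := h1 (((d b b).re + 1) / (2 * Complex.normSq z))
    have e : 2 * (((d b b).re + 1) / (2 * Complex.normSq z)) * Complex.normSq z = (d b b).re + 1 := by
      field_simp
    rw [e] at this
    linarith
  refine ⟨key b, ?_⟩
  rw [hsymm b a, key b, star_zero]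

lemma mul_domain (Φ : Matrix γ γ ℂ →ₗ[ℂ] Matrix α α ℂ) (hstar : ∀ A, Φ Aᴴ = (Φ A)ᴴ)
    (hS : ∀ A, (Φ (Aᴴ * A) - (Φ A)ᴴ * Φ A).PosSemidef) {σ : Matrix α α ℂ} (hσ : σ.PosSemidef)
    {A : Matrix γ γ ℂ} (hA : (σ * Φ (Aᴴ * A)).trace = (σ * ((Φ A)ᴴ * Φ A)).trace)
    (B : Matrix γ γ ℂ) :
    (σ * Φ (Bᴴ * A)).trace = (σ * ((Φ B)ᴴ * Φ A)).trace ∧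
    (σ * Φ (Aᴴ * B)).trace = (σ * ((Φ A)ᴴ * Φ B)).trace := by
  have := pos_form_radical (E := Matrix γ γ ℂ)
    (fun X Y => (σ * (Φ (Xᴴ * Y) - (Φ X)ᴴ * Φ Y)).trace)
    (by intro x y z
        simp only [conjTranspose_add, map_add, Matrix.add_mul, Matrix.mul_add, Matrix.mul_sub,
          trace_add, trace_sub]; ring)
    (by intro x y z
        simp only [map_add, Matrix.mul_add, Matrix.mul_sub,
          trace_add, trace_sub]; ring)
    (by intro c x y
        simp only [conjTranspose_smul, map_smul, Matrix.smul_mul, Matrix.mul_smul, Matrix.mul_sub,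
          trace_smul, trace_sub, smul_eq_mul]; ring)
    (by intro c x y
        simp only [map_smul, Matrix.mul_smul, Matrix.mul_sub,
          trace_smul, trace_sub, smul_eq_mul]; ring)
    (fun x => trace_mul_psd_nonneg hσ (hS x))
    (by intro x y
        rw [← trace_conjTranspose, conjTranspose_mul, hσ.1.eq, Matrix.trace_mul_comm,
          conjTranspose_sub, ← hstar (xᴴ * y), conjTranspose_mul, conjTranspose_mul,
          conjTranspose_conjTranspose, conjTranspose_conjTranspose])
    (a := A) (by simp only [Matrix.mul_sub, trace_sub, hA, sub_self]) B
  simpa only [Matrix.mul_sub, trace_sub, sub_eq_zero] using this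

lemma eq_zero_of_trace_mul {M : Matrix α α ℂ} (h : ∀ X : Matrix α α ℂ, (M * X).trace = 0) :
    M = 0 := by
  have := h Mᴴ
  rwa [trace_mul_conjTranspose_self_eq_zero_iff] at this

/-- One-sided fixed-point lemma. -/
lemma fix_lemma (E : Matrix α α ℂ →ₗ[ℂ] Matrix α α ℂ) (hstar : ∀ A, E Aᴴ = (E A)ᴴ)
    (hS : ∀ A, (E (Aᴴ * A) - (E A)ᴴ * E A).PosSemidef) {σ τ p g : Matrix α α ℂ}
    (hσ : σ.PosSemidef) (hidem : ∀ X, E (E X) = E X)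
    (hinv : ∀ X, (σ * E X).trace = (σ * X).trace) (hinvt : ∀ X, (τ * E X).trace = (τ * X).trace)
    (hEp : ∀ X, E X * p = E X) (hg : σ * g = p) (hgs : g * σ = p) (hgp : g * p = g)
    (ht : τ * p = τ) : E (τ * g) = τ * g := by
  set Z := τ * g with hZ
  have hZσ : Z * σ = τ := by rw [hZ, Matrix.mul_assoc, hgs, ht]
  have dom : ∀ X, (σ * E ((E X)ᴴ * E X)).trace = (σ * ((E (E X))ᴴ * E (E X))).trace := by
    intro X; rw [hinv, hidem]
  have h0 : (Z - E Z) * σ = 0 := by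
    apply eq_zero_of_trace_mul
    intro X
    have a1 : (σ * (E X * Z)).trace = (σ * (X * Z)).trace := by
      rw [← Matrix.mul_assoc, Matrix.trace_mul_comm, ← Matrix.mul_assoc, hZσ, hinvt,
        ← Matrix.mul_assoc σ X Z, Matrix.trace_mul_comm (σ * X), ← Matrix.mul_assoc, hZσ]
    have a2 : (σ * (E X * Z)).trace = (σ * (E X * E Z)).trace := by
      have := (mul_domain E hstar hS hσ (dom Xᴴ) Z).2
      rw [hidem, hinv, hstar, conjTranspose_conjTranspose] at this
      exact this
    have a3 : (σ * (X * E Z)).trace = (σ * (E X * E Z)).trace := by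
      have := (mul_domain E hstar hS hσ (dom Z) Xᴴ).1
      rw [hidem, hinv, hstar, conjTranspose_conjTranspose, conjTranspose_conjTranspose] at this
      exact this
    rw [Matrix.mul_assoc, Matrix.trace_mul_comm, Matrix.mul_assoc, Matrix.mul_sub, Matrix.mul_sub, trace_sub, a3, ← a2, a1,
      sub_self]
  have h1 : (Z - E Z) * p = 0 := by rw [← hg, ← Matrix.mul_assoc, h0, Matrix.zero_mul]
  rw [Matrix.sub_mul, hEp, hZ, Matrix.mul_assoc, hgp, sub_eq_zero] at h1
  exact h1.symm

/-- `X ↦ Φ (X ⊗ 1)`. -/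
noncomputable def leftMap (Φ : Matrix (α × α) (α × α) ℂ →ₗ[ℂ] Matrix α α ℂ) :
    Matrix α α ℂ →ₗ[ℂ] Matrix α α ℂ where
  toFun X := Φ (X ⊗ₖ 1)
  map_add' X Y := by rw [add_kronecker, map_add]
  map_smul' c X := by rw [smul_kronecker, map_smul]; rfl

/-- `X ↦ Φ (1 ⊗ X)`. -/
noncomputable def rightMap (Φ : Matrix (α × α) (α × α) ℂ →ₗ[ℂ] Matrix α α ℂ) :
    Matrix α α ℂ →ₗ[ℂ] Matrix α α ℂ where
  toFun X := Φ ((1 : Matrix α α ℂ) ⊗ₖ X)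
  map_add' X Y := by rw [kronecker_add, map_add]
  map_smul' c X := by rw [kronecker_smul, map_smul]; rfl

lemma core_p (Φ : Matrix (α × α) (α × α) ℂ →ₗ[ℂ] Matrix α α ℂ) (hstar : ∀ A, Φ Aᴴ = (Φ A)ᴴ)
    (hS : ∀ A, (Φ (Aᴴ * A) - (Φ A)ᴴ * Φ A).PosSemidef) {σ τ p g : Matrix α α ℂ}
    (hσ : σ.PosSemidef) (hτ : τᴴ = τ)
    (hidem1 : ∀ X, leftMap Φ (leftMap Φ X) = leftMap Φ X)
    (hidem2 : ∀ X, rightMap Φ (rightMap Φ X) = rightMap Φ X)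
    (hinv1 : ∀ X, (σ * leftMap Φ X).trace = (σ * X).trace)
    (hinv2 : ∀ X, (σ * rightMap Φ X).trace = (σ * X).trace)
    (hinvt1 : ∀ X, (τ * leftMap Φ X).trace = (τ * X).trace)
    (hinvt2 : ∀ X, (τ * rightMap Φ X).trace = (τ * X).trace)
    (hEp : ∀ X, Φ X * p = Φ X) (hg : σ * g = p) (hgs : g * σ = p) (hgp : g * p = g)
    (ht : τ * p = τ) : τ * σ = σ * τ := by
  have st1 : ∀ A, leftMap Φ Aᴴ = (leftMap Φ A)ᴴ := fun A => by
    change Φ (Aᴴ ⊗ₖ 1) = (Φ (A ⊗ₖ 1))ᴴ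
    rw [← hstar, conjTranspose_kronecker, conjTranspose_one]
  have st2 : ∀ A, rightMap Φ Aᴴ = (rightMap Φ A)ᴴ := fun A => by
    change Φ (1 ⊗ₖ Aᴴ) = (Φ (1 ⊗ₖ A))ᴴ
    rw [← hstar, conjTranspose_kronecker, conjTranspose_one]
  have m1 : ∀ A : Matrix α α ℂ, (A ⊗ₖ (1 : Matrix α α ℂ))ᴴ * (A ⊗ₖ 1) = (Aᴴ * A) ⊗ₖ 1 := fun A => by
    rw [conjTranspose_kronecker, conjTranspose_one, ← mul_kronecker_mul, Matrix.one_mul]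
  have m2 : ∀ A : Matrix α α ℂ, ((1 : Matrix α α ℂ) ⊗ₖ A)ᴴ * (1 ⊗ₖ A) = 1 ⊗ₖ (Aᴴ * A) := fun A => by
    rw [conjTranspose_kronecker, conjTranspose_one, ← mul_kronecker_mul, Matrix.one_mul]
  have hS1 : ∀ A, (leftMap Φ (Aᴴ * A) - (leftMap Φ A)ᴴ * leftMap Φ A).PosSemidef := fun A => by
    have := hS (A ⊗ₖ 1); rw [m1] at this; exact this
  have hS2 : ∀ A, (rightMap Φ (Aᴴ * A) - (rightMap Φ A)ᴴ * rightMap Φ A).PosSemidef := fun A => by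
    have := hS (1 ⊗ₖ A); rw [m2] at this; exact this
  have f1 := fix_lemma (leftMap Φ) st1 hS1 hσ hidem1 hinv1 hinvt1 (fun X => hEp _) hg hgs hgp ht
  have f2 := fix_lemma (rightMap Φ) st2 hS2 hσ hidem2 hinv2 hinvt2 (fun X => hEp _) hg hgs hgp ht
  set Z := τ * g with hZ
  have hZσ : Z * σ = τ := by rw [hZ, Matrix.mul_assoc, hgs, ht]
  have hσZ : σ * Zᴴ = τ := by
    have := congrArg conjTranspose hZσ
    rwa [conjTranspose_mul, hσ.1.eq, hτ] at this
  have f1' : Φ (Z ⊗ₖ 1) = Z := f1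
  have f2' : Φ (1 ⊗ₖ Z) = Z := f2
  have f2s : Φ (1 ⊗ₖ Zᴴ) = Zᴴ := by have := st2 Z; rw [f2] at this; exact this
  have f1s : Φ (Zᴴ ⊗ₖ 1) = Zᴴ := by have := st1 Z; rw [f1] at this; exact this
  have dom : ∀ W, leftMap Φ W = W → (σ * Φ ((W ⊗ₖ 1)ᴴ * (W ⊗ₖ 1))).trace = (σ * ((Φ (W ⊗ₖ 1))ᴴ * Φ (W ⊗ₖ 1))).trace := by
    intro W hW
    rw [m1]
    change (σ * leftMap Φ (Wᴴ * W)).trace = (σ * ((leftMap Φ W)ᴴ * leftMap Φ W)).trace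
    rw [hinv1, hW]
  have c1 : (σ * (Z * Zᴴ)).trace = (σ * Φ (Z ⊗ₖ Zᴴ)).trace := by
    have := (mul_domain Φ hstar hS hσ (dom Zᴴ f1s) (1 ⊗ₖ Zᴴ)).2
    rw [f1s, f2s, conjTranspose_conjTranspose, conjTranspose_kronecker, conjTranspose_one,
      conjTranspose_conjTranspose, ← mul_kronecker_mul, Matrix.one_mul, Matrix.mul_one] at this
    exact this.symm
  have c2 : (σ * (Zᴴ * Z)).trace = (σ * Φ (Z ⊗ₖ Zᴴ)).trace := by
    have := (mul_domain Φ hstar hS hσ (dom Z f1) (1 ⊗ₖ Z)).1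
    rw [f1', f2', conjTranspose_kronecker, conjTranspose_one,
      ← mul_kronecker_mul, Matrix.one_mul, Matrix.mul_one] at this
    exact this.symm
  have c3 : (σ * (Z * Z)).trace = (σ * (Zᴴ * Z)).trace := by
    rw [← Matrix.mul_assoc σ Zᴴ Z, hσZ, ← hZσ, ← Matrix.mul_assoc, Matrix.trace_mul_comm,
      ← Matrix.mul_assoc, Matrix.trace_mul_comm, ← Matrix.mul_assoc, Matrix.trace_mul_comm]
  have c4 : (σ * (Zᴴ * Zᴴ)).trace = (σ * (Zᴴ * Z)).trace := by
    rw [← Matrix.mul_assoc, hσZ, ← hZσ, Matrix.mul_assoc, Matrix.trace_mul_comm, Matrix.mul_assoc]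
  have hz : (Zᴴ - Z) * σ = 0 := by
    apply mul_eq_zero_of_trace hσ
    rw [conjTranspose_sub, conjTranspose_conjTranspose, Matrix.mul_sub, Matrix.sub_mul,
      Matrix.sub_mul, Matrix.mul_sub, Matrix.mul_sub, Matrix.mul_sub, trace_sub, trace_sub,
      trace_sub, c3, c4, c1, ← c2]
    ring
  have h3 : Zᴴ * σ = τ := by rw [Matrix.sub_mul, hZσ, sub_eq_zero] at hz; exact hz
  have h4 : σ * Z = τ := by
    have := congrArg conjTranspose h3
    rwa [conjTranspose_mul, hσ.1.eq, hτ, conjTranspose_conjTranspose] at this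
  calc τ * σ = σ * Z * σ := by rw [h4]
    _ = σ * τ := by rw [Matrix.mul_assoc, hZσ]

lemma core_dom (Φ : Matrix (α × α) (α × α) ℂ →ₗ[ℂ] Matrix α α ℂ) (hstar : ∀ A, Φ Aᴴ = (Φ A)ᴴ)
    (hS : ∀ A, (Φ (Aᴴ * A) - (Φ A)ᴴ * Φ A).PosSemidef) {σ τ : Matrix α α ℂ}
    (hσ : σ.PosSemidef) (hτ : τ.PosSemidef) (hle : (σ - τ).PosSemidef)
    (hidem1 : ∀ X, leftMap Φ (leftMap Φ X) = leftMap Φ X)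
    (hidem2 : ∀ X, rightMap Φ (rightMap Φ X) = rightMap Φ X)
    (hinv1 : ∀ X, (σ * leftMap Φ X).trace = (σ * X).trace)
    (hinv2 : ∀ X, (σ * rightMap Φ X).trace = (σ * X).trace)
    (hinvt1 : ∀ X, (τ * leftMap Φ X).trace = (τ * X).trace)
    (hinvt2 : ∀ X, (τ * rightMap Φ X).trace = (τ * X).trace) : τ * σ = σ * τ := by
  obtain ⟨p, g, hpp, hps, hg, hgs, hgp, hsp, hpσ⟩ := support_exists hσ
  have ht : τ * p = τ := by
    have hq : (1 - p)ᴴ = 1 - p := by rw [conjTranspose_sub, hps, conjTranspose_one]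
    have hq2 : (1 - p) * (1 - p) = 1 - p := by
      rw [Matrix.mul_sub, Matrix.sub_mul, Matrix.sub_mul, hpp]; simp
    have h0 : (σ * ((1 - p)ᴴ * (1 - p))).trace = 0 := by
      rw [hq, hq2, Matrix.mul_sub, hsp, Matrix.mul_one, sub_self, trace_zero]
    have h1 := trace_mul_psd_nonneg hle (posSemidef_conjTranspose_mul_self (1 - p))
    have h2 := trace_mul_psd_nonneg hτ (posSemidef_conjTranspose_mul_self (1 - p))
    rw [Matrix.sub_mul, trace_sub, h0, zero_sub] at h1
    have h3 : (τ * ((1 - p)ᴴ * (1 - p))).trace = 0 := le_antisymm (neg_nonneg.mp h1) h2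
    have h4 := mul_eq_zero_of_trace hτ h3
    have := congrArg conjTranspose h4
    rw [conjTranspose_mul, hq, hτ.1.eq, conjTranspose_zero, Matrix.mul_sub, Matrix.mul_one,
      sub_eq_zero] at this
    exact this.symm
  have hpt : p * τ = τ := by
    have := congrArg conjTranspose ht
    rwa [conjTranspose_mul, hps, hτ.1.eq] at this
  -- compressed map
  let Ψ : Matrix (α × α) (α × α) ℂ →ₗ[ℂ] Matrix α α ℂ :=
    { toFun := fun B => p * Φ B * p
      map_add' := fun X Y => by rw [map_add, Matrix.mul_add, Matrix.add_mul]
      map_smul' := fun c X => by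
        rw [map_smul, Matrix.mul_smul, Matrix.smul_mul]; rfl }
  have hΨ : ∀ B, Ψ B = p * Φ B * p := fun _ => rfl
  have starΨ : ∀ A, Ψ Aᴴ = (Ψ A)ᴴ := fun A => by
    rw [hΨ, hΨ, hstar, conjTranspose_mul, conjTranspose_mul, hps, Matrix.mul_assoc]
  have SΨ : ∀ A, (Ψ (Aᴴ * A) - (Ψ A)ᴴ * Ψ A).PosSemidef := by
    intro A
    have e : Ψ (Aᴴ * A) - (Ψ A)ᴴ * Ψ A = pᴴ * (Φ (Aᴴ * A) - (Φ A)ᴴ * Φ A) * p +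
        ((1 - p) * Φ A * p)ᴴ * ((1 - p) * Φ A * p) := by
      have : ((1 - p) * Φ A * p)ᴴ * ((1 - p) * Φ A * p) = p * (Φ A)ᴴ * (1 - p) * Φ A * p := by
        rw [conjTranspose_mul, conjTranspose_mul, conjTranspose_sub, conjTranspose_one, hps]
        have hq2 : (1 - p) * (1 - p) = 1 - p := by
          rw [Matrix.mul_sub, Matrix.sub_mul, Matrix.sub_mul, hpp]; simp
        calc _ = p * (Φ A)ᴴ * ((1 - p) * (1 - p)) * Φ A * p := by simp only [Matrix.mul_assoc]
          _ = _ := by rw [hq2]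
      rw [this, hΨ, hΨ, conjTranspose_mul, conjTranspose_mul, hps]
      have : p * ((Φ A)ᴴ * p) * (p * Φ A * p) = p * (Φ A)ᴴ * p * Φ A * p := by
        calc _ = p * (Φ A)ᴴ * (p * p) * Φ A * p := by simp only [Matrix.mul_assoc]
          _ = _ := by rw [hpp]
      rw [this]
      noncomm_ring
    rw [e]
    exact ((hS A).conjTranspose_mul_mul_same p).add (posSemidef_conjTranspose_mul_self _)
  have lΨ : ∀ X, leftMap Ψ X = p * leftMap Φ X * p := fun _ => rfl
  have rΨ : ∀ X, rightMap Ψ X = p * rightMap Φ X * p := fun _ => rfl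
  have tr_s : ∀ X, (σ * (p * X * p)).trace = (σ * X).trace := fun X => by
    rw [← Matrix.mul_assoc, ← Matrix.mul_assoc, hsp, Matrix.trace_mul_comm, ← Matrix.mul_assoc, hpσ]
  have tr_t : ∀ X, (τ * (p * X * p)).trace = (τ * X).trace := fun X => by
    rw [← Matrix.mul_assoc, ← Matrix.mul_assoc, ht, Matrix.trace_mul_comm, ← Matrix.mul_assoc, hpt]
  -- generic idempotence
  have idem : ∀ E : Matrix α α ℂ →ₗ[ℂ] Matrix α α ℂ, (∀ A, E Aᴴ = (E A)ᴴ) →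
      (∀ A, (E (Aᴴ * A) - (E A)ᴴ * E A).PosSemidef) → (∀ X, E (E X) = E X) →
      (∀ X, (σ * E X).trace = (σ * X).trace) → ∀ X, p * E (p * E X * p) * p = p * E X * p := by
    intro E Est ES Eid Einv X
    have k1 : ∀ A, A * σ = 0 → E A * p = 0 := by
      intro A hA
      have h1 := trace_mul_psd_nonneg hσ (ES A)
      have h2 := trace_mul_psd_nonneg hσ (posSemidef_conjTranspose_mul_self (E A))
      have h3 : (σ * (Aᴴ * A)).trace = 0 := by
        rw [Matrix.trace_mul_comm, Matrix.mul_assoc, hA, Matrix.mul_zero, trace_zero]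
      rw [Matrix.mul_sub, trace_sub, Einv, h3, zero_sub] at h1
      have h4 := mul_eq_zero_of_trace hσ (le_antisymm (neg_nonneg.mp h1) h2)
      rw [← hg, ← Matrix.mul_assoc, h4, Matrix.zero_mul]
    have k2 : ∀ A, σ * A = 0 → p * E A = 0 := by
      intro A hA
      have := k1 Aᴴ (by have := congrArg conjTranspose hA; rwa [conjTranspose_mul, hσ.1.eq, conjTranspose_zero] at this)
      have := congrArg conjTranspose this
      rwa [Est, conjTranspose_mul, conjTranspose_conjTranspose, hps, conjTranspose_zero] at this
    have e : E X = p * E X * p + ((1 - p) * E X + p * E X * (1 - p)) := by noncomm_ring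
    have e1 := k2 ((1 - p) * E X) (by
      rw [← Matrix.mul_assoc, Matrix.mul_sub, hsp, Matrix.mul_one, sub_self, Matrix.zero_mul])
    have e2 := k1 (p * E X * (1 - p)) (by
      rw [Matrix.mul_assoc, Matrix.sub_mul, hpσ, Matrix.one_mul, sub_self, Matrix.mul_zero])
    have := congrArg (fun Y => p * E Y * p) e
    simp only [map_add, Matrix.mul_add, Matrix.add_mul, e1, Eid, Matrix.mul_assoc] at this e2
    rw [e2] at this
    simp only [Matrix.mul_assoc, Matrix.zero_mul, Matrix.mul_zero, add_zero] at this ⊢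
    exact this.symm
  have st1 : ∀ A, leftMap Φ Aᴴ = (leftMap Φ A)ᴴ := fun A => by
    change Φ (Aᴴ ⊗ₖ 1) = (Φ (A ⊗ₖ 1))ᴴ
    rw [← hstar, conjTranspose_kronecker, conjTranspose_one]
  have st2 : ∀ A, rightMap Φ Aᴴ = (rightMap Φ A)ᴴ := fun A => by
    change Φ (1 ⊗ₖ Aᴴ) = (Φ (1 ⊗ₖ A))ᴴ
    rw [← hstar, conjTranspose_kronecker, conjTranspose_one]
  have hS1 : ∀ A, (leftMap Φ (Aᴴ * A) - (leftMap Φ A)ᴴ * leftMap Φ A).PosSemidef := fun A => by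
    have := hS (A ⊗ₖ 1)
    rw [conjTranspose_kronecker, conjTranspose_one, ← mul_kronecker_mul, Matrix.one_mul] at this
    exact this
  have hS2 : ∀ A, (rightMap Φ (Aᴴ * A) - (rightMap Φ A)ᴴ * rightMap Φ A).PosSemidef := fun A => by
    have := hS (1 ⊗ₖ A)
    rw [conjTranspose_kronecker, conjTranspose_one, ← mul_kronecker_mul, Matrix.one_mul] at this
    exact this
  refine core_p Ψ starΨ SΨ (p := p) (g := g) hσ hτ.1.eq ?_ ?_ ?_ ?_ ?_ ?_ ?_ hg hgs hgp ht
  · intro X; simp only [lΨ]; exact idem _ st1 hS1 hidem1 hinv1 X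
  · intro X; simp only [rΨ]; exact idem _ st2 hS2 hidem2 hinv2 X
  · intro X; rw [lΨ, tr_s, hinv1]
  · intro X; rw [rΨ, tr_s, hinv2]
  · intro X; rw [lΨ, tr_t, hinvt1]
  · intro X; rw [rΨ, tr_t, hinvt2]
  · intro X; rw [hΨ, Matrix.mul_assoc, hpp]

end Core

set_option linter.unusedSectionVars false

section Heis
variable {α γ : Type*} [Fintype α] [DecidableEq α] [Fintype γ] [DecidableEq γ]

lemma lin_apply {α' γ' : Type*} (Λ : Matrix α α ℂ →ₗ[ℂ] Matrix α' γ' ℂ) (Y : Matrix α α ℂ) (i : α')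
    (j : γ') :
    Λ Y i j = ∑ b, ∑ b', Y b b' * Λ (Matrix.single b b' 1) i j := by
  conv_lhs => rw [Matrix.matrix_eq_sum_single Y]
  rw [map_sum, Matrix.sum_apply]
  refine Finset.sum_congr rfl fun b _ => ?_
  rw [map_sum, Matrix.sum_apply]
  refine Finset.sum_congr rfl fun b' _ => ?_
  have : Matrix.single b b' (Y b b') = Y b b' • Matrix.single b b' (1 : ℂ) := by
    rw [Matrix.smul_single, smul_eq_mul, mul_one]
  rw [this, map_smul, Matrix.smul_apply, smul_eq_mul]

/-- Heisenberg dual. -/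
noncomputable def heis (Λ : Matrix α α ℂ →ₗ[ℂ] Matrix γ γ ℂ) :
    Matrix γ γ ℂ →ₗ[ℂ] Matrix α α ℂ where
  toFun B := Matrix.of fun i j => (Λ (Matrix.single j i 1) * B).trace
  map_add' X Y := by ext i j; simp [Matrix.mul_add]
  map_smul' c X := by ext i j; simp

lemma trace_heis (Λ : Matrix α α ℂ →ₗ[ℂ] Matrix γ γ ℂ) (X : Matrix α α ℂ) (B : Matrix γ γ ℂ) :
    (X * heis Λ B).trace = (Λ X * B).trace := by
  have h : ∀ i j, heis Λ B i j = (Λ (Matrix.single j i 1) * B).trace := fun _ _ => rfl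
  let f : Matrix α α ℂ →ₗ[ℂ] Matrix Unit Unit ℂ :=
    { toFun := fun X => Matrix.of fun _ _ => (Λ X * B).trace
      map_add' := fun X Y => by ext i j; simp [Matrix.add_mul]
      map_smul' := fun X Y => by ext i j; simp }
  have := lin_apply f X () ()
  change (Λ X * B).trace = ∑ b, ∑ b', X b b' * (Λ (Matrix.single b b' 1) * B).trace at this
  rw [this]
  simp only [Matrix.trace, Matrix.diag_apply, Matrix.mul_apply, h]

lemma dot_heis (Λ : Matrix α α ℂ →ₗ[ℂ] Matrix γ γ ℂ) (u v : α → ℂ) (B : Matrix γ γ ℂ) :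
    star u ⬝ᵥ (heis Λ B *ᵥ v) = (Λ (vecMulVec v (star u)) * B).trace := by
  rw [← trace_heis, Matrix.vecMulVec_mul, Matrix.trace_vecMulVec, dotProduct_mulVec, dotProduct_comm]

lemma polarize (x y : α → ℂ) :
    vecMulVec x (star y) = (1 / 4 : ℂ) • (vecMulVec (x + y) (star (x + y))
      - vecMulVec (x - y) (star (x - y))
      + Complex.I • vecMulVec (x + Complex.I • y) (star (x + Complex.I • y))
      - Complex.I • vecMulVec (x - Complex.I • y) (star (x - Complex.I • y))) := by
  ext i j
  simp [vecMulVec_apply]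
  ring_nf
  simp
  ring

lemma psd_span (X : Matrix α α ℂ) :
    X ∈ Submodule.span ℂ {P : Matrix α α ℂ | P.PosSemidef} := by
  rw [Matrix.matrix_eq_sum_single X]
  refine Submodule.sum_mem _ fun i _ => Submodule.sum_mem _ fun j _ => ?_
  have e : Matrix.single i j (X i j) =
      X i j • vecMulVec (Pi.single i 1) (star (Pi.single j (1 : ℂ))) := by
    ext a b
    simp only [Matrix.single_apply, Matrix.smul_apply, vecMulVec_apply, Pi.star_apply,
      Pi.single_apply, smul_eq_mul]
    by_cases h1 : i = a <;> by_cases h2 : j = b <;> simp [h1, h2, eq_comm]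
  rw [e, polarize]
  have hm : ∀ z : α → ℂ, vecMulVec z (star z) ∈
      Submodule.span ℂ {P : Matrix α α ℂ | P.PosSemidef} := fun z =>
    Submodule.subset_span (posSemidef_vecMulVec_self_star z)
  refine Submodule.smul_mem _ _ (Submodule.smul_mem _ _ ?_)
  exact Submodule.sub_mem _ (Submodule.add_mem _ (Submodule.sub_mem _ (hm _) (hm _))
    (Submodule.smul_mem _ _ (hm _))) (Submodule.smul_mem _ _ (hm _))

lemma cp_pos {Λ : Matrix α α ℂ →ₗ[ℂ] Matrix γ γ ℂ} (h : IsCompletelyPositive Λ)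
    {X : Matrix α α ℂ} (hX : X.PosSemidef) : (Λ X).PosSemidef := by
  have := h 1 (X.submatrix Prod.snd Prod.snd) (hX.submatrix _)
  exact this.submatrix (fun i => ((0 : Fin 1), i))

lemma cp_hermitian {Λ : Matrix α α ℂ →ₗ[ℂ] Matrix γ γ ℂ} (h : IsCompletelyPositive Λ)
    (X : Matrix α α ℂ) : Λ Xᴴ = (Λ X)ᴴ := by
  induction psd_span X using Submodule.span_induction with
  | mem x hx => rw [hx.1.eq, (cp_pos h hx).1.eq]
  | zero => simp
  | add x y _ _ hx hy => simp [hx, hy]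
  | smul c x _ hx => simp [hx]

lemma heis_star {Λ : Matrix α α ℂ →ₗ[ℂ] Matrix γ γ ℂ} (h : IsCompletelyPositive Λ)
    (B : Matrix γ γ ℂ) : heis Λ Bᴴ = (heis Λ B)ᴴ := by
  ext i j
  change (Λ (Matrix.single j i 1) * Bᴴ).trace = star ((Λ (Matrix.single i j 1) * B).trace)
  rw [← trace_conjTranspose, conjTranspose_mul, ← cp_hermitian h, Matrix.trace_mul_comm]
  congr 3
  simp [Matrix.conjTranspose_single]

lemma heis_schwarz {Λ : Matrix α α ℂ →ₗ[ℂ] Matrix γ γ ℂ} (h : IsQuantumChannel Λ)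
    (A : Matrix γ γ ℂ) : (heis Λ (Aᴴ * A) - (heis Λ A)ᴴ * heis Λ A).PosSemidef := by
  apply PosSemidef.of_dotProduct_mulVec_nonneg
  · rw [IsHermitian, conjTranspose_sub, ← heis_star h.1, conjTranspose_mul, conjTranspose_mul,
      conjTranspose_conjTranspose, conjTranspose_conjTranspose]
  intro v
  set u := heis Λ A *ᵥ v with hu
  let w : Fin 2 → α → ℂ := ![v, u]
  have hM := h.1 2 (vecMulVec (fun q => w q.1 q.2) (star fun q => w q.1 q.2))
    (posSemidef_vecMulVec_self_star _)
  let C : Fin 2 → Matrix γ γ ℂ := ![A, -1]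
  let D : Matrix γ (Fin 2 × γ) ℂ := Matrix.of fun c q => C q.1 c q.2
  have hT := (hM.mul_mul_conjTranspose_same D).trace_nonneg
  have hN : ∀ a b : Fin 2, ∀ i j, idTensor Λ (vecMulVec (fun q : Fin 2 × α => w q.1 q.2) (star fun q : Fin 2 × α => w q.1 q.2))
      (a, i) (b, j) = Λ (vecMulVec (w a) (star (w b))) i j := fun _ _ _ _ => rfl
  have e : ∀ N : Matrix (Fin 2 × γ) (Fin 2 × γ) ℂ, (D * N * Dᴴ).trace =
      ∑ a, ∑ b, ((Matrix.of fun i j => N (a, i) (b, j)) * ((C b)ᴴ * C a)).trace := by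
    intro N
    have : ∀ a b, ((Matrix.of fun i j => N (a, i) (b, j)) * ((C b)ᴴ * C a)).trace =
        (C a * (Matrix.of fun i j => N (a, i) (b, j)) * (C b)ᴴ).trace := fun a b => by
      rw [← Matrix.mul_assoc, Matrix.trace_mul_comm, Matrix.mul_assoc]
    simp only [this]
    simp only [Matrix.trace, Matrix.diag_apply, Matrix.mul_apply, Fintype.sum_prod_type,
      conjTranspose_apply, Matrix.of_apply, D, Finset.sum_mul]
    simp only [Fin.sum_univ_two]
    simp only [Finset.sum_add_distrib]
    ring
  rw [e] at hT
  have e2 : ∀ a b : Fin 2, (Matrix.of fun i j => idTensor Λ (vecMulVec (fun q : Fin 2 × α => w q.1 q.2) (star fun q : Fin 2 × α => w q.1 q.2))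
      (a, i) (b, j)) = Λ (vecMulVec (w a) (star (w b))) := fun _ _ => rfl
  simp only [e2, Fin.sum_univ_two] at hT
  simp only [w, C, Matrix.cons_val_zero, Matrix.cons_val_one] at hT
  rw [conjTranspose_neg, conjTranspose_one] at hT
  simp only [Matrix.neg_mul, Matrix.mul_neg, Matrix.one_mul, Matrix.mul_one, neg_neg, trace_neg,
    ← dot_heis, h.2] at hT
  rw [← hu, heis_star h.1, trace_vecMulVec, dotProduct_comm u] at hT
  have e3 : star v ⬝ᵥ ((heis Λ A)ᴴ *ᵥ u) = star u ⬝ᵥ u := by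
    rw [dotProduct_mulVec, hu, star_mulVec]
  rw [e3] at hT
  rw [Matrix.sub_mulVec, dotProduct_sub, ← Matrix.mulVec_mulVec, ← hu, e3]
  refine hT.trans (le_of_eq ?_)
  ring

end Heis

section Marg
variable {α γ κ : Type*} [Fintype α] [DecidableEq α] [Fintype γ] [DecidableEq γ]
  [Fintype κ] [DecidableEq κ]

/-- partial trace over the second factor -/
noncomputable def ptr2 : Matrix (α × γ) (α × γ) ℂ →ₗ[ℂ] Matrix α α ℂ where
  toFun N := Matrix.of fun i j => ∑ k, N (i, k) (j, k)
  map_add' X Y := by ext i j; simp [Finset.sum_add_distrib]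
  map_smul' c X := by ext i j; simp [Finset.mul_sum]

/-- partial trace over the first factor -/
noncomputable def ptr1 : Matrix (α × γ) (α × γ) ℂ →ₗ[ℂ] Matrix γ γ ℂ where
  toFun N := Matrix.of fun i j => ∑ k, N (k, i) (k, j)
  map_add' X Y := by ext i j; simp [Finset.sum_add_distrib]
  map_smul' c X := by ext i j; simp [Finset.mul_sum]

lemma ptr2_apply (N : Matrix (α × γ) (α × γ) ℂ) (i j) : ptr2 N i j = ∑ k, N (i, k) (j, k) := rfl
lemma ptr1_apply (N : Matrix (α × γ) (α × γ) ℂ) (i j) : ptr1 N i j = ∑ k, N (k, i) (k, j) := rfl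

lemma trace_ptr2_mul (N : Matrix (α × γ) (α × γ) ℂ) (X : Matrix α α ℂ) :
    (N * (X ⊗ₖ (1 : Matrix γ γ ℂ))).trace = (ptr2 N * X).trace := by
  simp only [Matrix.trace, Matrix.diag_apply, Matrix.mul_apply, Fintype.sum_prod_type,
    kroneckerMap_apply, ptr2_apply, Finset.sum_mul, Matrix.one_apply]
  refine Finset.sum_congr rfl fun i _ => ?_
  rw [Finset.sum_comm]
  refine Finset.sum_congr rfl fun j _ => ?_
  simp

lemma trace_ptr1_mul (N : Matrix (α × γ) (α × γ) ℂ) (X : Matrix γ γ ℂ) :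
    (N * ((1 : Matrix α α ℂ) ⊗ₖ X)).trace = (ptr1 N * X).trace := by
  simp only [Matrix.trace, Matrix.diag_apply, Matrix.mul_apply, Fintype.sum_prod_type,
    kroneckerMap_apply, ptr1_apply, Finset.sum_mul, Matrix.one_apply]
  rw [Finset.sum_comm]
  refine Finset.sum_congr rfl fun i _ => ?_
  rw [Finset.sum_comm]
  conv_rhs => rw [Finset.sum_comm]
  rw [Finset.sum_comm]
  refine Finset.sum_congr rfl fun j _ => ?_
  rw [Finset.sum_comm]
  simp

lemma trace_ptr2 (N : Matrix (α × γ) (α × γ) ℂ) : (ptr2 N).trace = N.trace := by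
  simp only [Matrix.trace, Matrix.diag_apply, Fintype.sum_prod_type, ptr2_apply]

lemma trace_ptr1 (N : Matrix (α × γ) (α × γ) ℂ) : (ptr1 N).trace = N.trace := by
  simp only [Matrix.trace, Matrix.diag_apply, Fintype.sum_prod_type, ptr1_apply]
  rw [Finset.sum_comm]

lemma heis_ext {S T : Matrix α α ℂ} (h : ∀ X : Matrix α α ℂ, (X * S).trace = (X * T).trace) :
    S = T := by
  rw [← sub_eq_zero]
  apply eq_zero_of_trace_mul
  intro X
  rw [Matrix.trace_mul_comm, Matrix.mul_sub, trace_sub, h, sub_self]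

lemma channel_commute {Λ : Matrix α α ℂ →ₗ[ℂ] Matrix (α × α) (α × α) ℂ} (h : IsQuantumChannel Λ)
    (h1 : ∀ X, ptr2 (Λ (ptr2 (Λ X))) = ptr2 (Λ X)) (h2 : ∀ X, ptr1 (Λ (ptr1 (Λ X))) = ptr1 (Λ X))
    {τ τ' : Matrix α α ℂ} (ht : τ.PosSemidef) (ht' : τ'.PosSemidef)
    (f1 : ptr2 (Λ τ) = τ) (f2 : ptr1 (Λ τ) = τ) (f1' : ptr2 (Λ τ') = τ') (f2' : ptr1 (Λ τ') = τ') :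
    τ * τ' = τ' * τ := by
  have l : ∀ Y X, (Y * leftMap (heis Λ) X).trace = (ptr2 (Λ Y) * X).trace := by
    intro Y X
    change (Y * heis Λ (X ⊗ₖ 1)).trace = _
    rw [trace_heis, trace_ptr2_mul]
  have r : ∀ Y X, (Y * rightMap (heis Λ) X).trace = (ptr1 (Λ Y) * X).trace := by
    intro Y X
    change (Y * heis Λ (1 ⊗ₖ X)).trace = _
    rw [trace_heis, trace_ptr1_mul]
  have := core_dom (heis Λ) (heis_star h.1) (heis_schwarz h) (σ := τ + τ') (τ := τ)
    (ht.add ht') ht (by rwa [add_sub_cancel_left])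
    (by intro X; apply heis_ext; intro Y; rw [l, l, l, h1])
    (by intro X; apply heis_ext; intro Y; rw [r, r, r, h2])
    (by intro X; rw [l, map_add, map_add, f1, f1'])
    (by intro X; rw [r, map_add, map_add, f2, f2'])
    (by intro X; rw [l, f1])
    (by intro X; rw [r, f2])
  rw [Matrix.mul_add, Matrix.add_mul] at this
  exact add_left_cancel this

/-! ### complete positivity -/

lemma cp_any {Λ : Matrix α α ℂ →ₗ[ℂ] Matrix γ γ ℂ} (h : IsCompletelyPositive Λ)
    {M : Matrix (κ × α) (κ × α) ℂ} (hM : M.PosSemidef) : (idTensor Λ M).PosSemidef := by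
  let e := Fintype.equivFin κ
  have := h (Fintype.card κ) (M.submatrix (Prod.map e.symm id) (Prod.map e.symm id))
    (hM.submatrix _)
  have := this.submatrix (Prod.map e id)
  convert this using 1
  ext p q
  simp [idTensor]

lemma cp_comp {Λ : Matrix α α ℂ →ₗ[ℂ] Matrix γ γ ℂ} {Λ' : Matrix γ γ ℂ →ₗ[ℂ] Matrix κ κ ℂ}
    (h : IsCompletelyPositive Λ) (h' : IsCompletelyPositive Λ') :
    IsCompletelyPositive (Λ' ∘ₗ Λ) := fun k M hM => h' k _ (h k M hM)

lemma cp_idTensor {Λ : Matrix α α ℂ →ₗ[ℂ] Matrix γ γ ℂ} (h : IsCompletelyPositive Λ) :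
    IsCompletelyPositive (idTensor (α := κ) Λ) := by
  intro k M hM
  have := cp_any (κ := Fin k × κ) h (hM.submatrix (fun q : (Fin k × κ) × α => (q.1.1, (q.1.2, q.2))))
  exact this.submatrix (fun q : Fin k × κ × γ => ((q.1, q.2.1), q.2.2))

lemma cp_tensorId {Λ : Matrix α α ℂ →ₗ[ℂ] Matrix γ γ ℂ} (h : IsCompletelyPositive Λ) :
    IsCompletelyPositive (tensorId (β := κ) Λ) := by
  intro k M hM
  have := cp_any (κ := Fin k × κ) h (hM.submatrix (fun q : (Fin k × κ) × α => (q.1.1, (q.2, q.1.2))))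
  exact this.submatrix (fun q : Fin k × γ × κ => ((q.1, q.2.2), q.2.1))

lemma cp_ptr2 : IsCompletelyPositive (ptr2 : Matrix (α × γ) (α × γ) ℂ →ₗ[ℂ] Matrix α α ℂ) := by
  intro k M hM
  have : idTensor ptr2 M = ∑ c : γ, M.submatrix (fun q : Fin k × α => (q.1, (q.2, c)))
      (fun q : Fin k × α => (q.1, (q.2, c))) := by
    ext p q
    rw [Matrix.sum_apply]
    rfl
  rw [this]
  exact posSemidef_sum _ fun c _ => hM.submatrix _

lemma cp_ptr1 : IsCompletelyPositive (ptr1 : Matrix (α × γ) (α × γ) ℂ →ₗ[ℂ] Matrix γ γ ℂ) := by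
  intro k M hM
  have : idTensor ptr1 M = ∑ c : α, M.submatrix (fun q : Fin k × γ => (q.1, (c, q.2)))
      (fun q : Fin k × γ => (q.1, (c, q.2))) := by
    ext p q
    rw [Matrix.sum_apply]
    rfl
  rw [this]
  exact posSemidef_sum _ fun c _ => hM.submatrix _

lemma ch_comp {Λ : Matrix α α ℂ →ₗ[ℂ] Matrix γ γ ℂ} {Λ' : Matrix γ γ ℂ →ₗ[ℂ] Matrix κ κ ℂ}
    (h : IsQuantumChannel Λ) (h' : IsQuantumChannel Λ') :
    IsQuantumChannel (Λ' ∘ₗ Λ) :=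
  ⟨cp_comp h.1 h'.1, fun X => by rw [LinearMap.comp_apply, h'.2, h.2]⟩

lemma ch_ptr2 : IsQuantumChannel (ptr2 : Matrix (α × γ) (α × γ) ℂ →ₗ[ℂ] Matrix α α ℂ) :=
  ⟨cp_ptr2, trace_ptr2⟩

lemma ch_ptr1 : IsQuantumChannel (ptr1 : Matrix (α × γ) (α × γ) ℂ →ₗ[ℂ] Matrix γ γ ℂ) :=
  ⟨cp_ptr1, trace_ptr1⟩

lemma ptr2_idTensor {Λ : Matrix α α ℂ →ₗ[ℂ] Matrix γ γ ℂ} (h : ∀ X, (Λ X).trace = X.trace)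
    (M : Matrix (κ × α) (κ × α) ℂ) : ptr2 (idTensor Λ M) = ptr2 M := by
  ext i j
  exact h (Matrix.of fun b b' => M (i, b) (j, b'))

lemma ptr1_tensorId {Λ : Matrix α α ℂ →ₗ[ℂ] Matrix γ γ ℂ} (h : ∀ X, (Λ X).trace = X.trace)
    (M : Matrix (α × κ) (α × κ) ℂ) : ptr1 (tensorId Λ M) = ptr1 M := by
  ext i j
  exact h (Matrix.of fun b b' => M (b, i) (b', j))

lemma ptr1_idTensor (Λ : Matrix α α ℂ →ₗ[ℂ] Matrix γ γ ℂ)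
    (M : Matrix (κ × α) (κ × α) ℂ) : ptr1 (idTensor Λ M) = Λ (ptr1 M) := by
  have : ptr1 M = ∑ k, Matrix.of fun b b' => M (k, b) (k, b') := by
    ext i j; rw [Matrix.sum_apply]; rfl
  rw [this, map_sum]
  ext i j; rw [Matrix.sum_apply]; rfl

lemma ptr2_tensorId (Λ : Matrix α α ℂ →ₗ[ℂ] Matrix γ γ ℂ)
    (M : Matrix (α × κ) (α × κ) ℂ) : ptr2 (tensorId Λ M) = Λ (ptr2 M) := by
  have : ptr2 M = ∑ k, Matrix.of fun b b' => M (b, k) (b', k) := by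
    ext i j; rw [Matrix.sum_apply]; rfl
  rw [this, map_sum]
  ext i j; rw [Matrix.sum_apply]; rfl

lemma ch_idTensor {Λ : Matrix α α ℂ →ₗ[ℂ] Matrix γ γ ℂ} (h : IsQuantumChannel Λ) :
    IsQuantumChannel (idTensor (α := κ) Λ) :=
  ⟨cp_idTensor h.1, fun X => by rw [← trace_ptr2, ptr2_idTensor h.2, trace_ptr2]⟩

lemma ch_tensorId {Λ : Matrix α α ℂ →ₗ[ℂ] Matrix γ γ ℂ} (h : IsQuantumChannel Λ) :
    IsQuantumChannel (tensorId (β := κ) Λ) :=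
  ⟨cp_tensorId h.1, fun X => by rw [← trace_ptr1, ptr1_tensorId h.2, trace_ptr1]⟩

/-- Product of broadcasts. -/
lemma broadcast_comp {Λ Λ' : Matrix α α ℂ →ₗ[ℂ] Matrix (α × α) (α × α) ℂ}
    (h : IsQuantumChannel Λ) (h' : IsQuantumChannel Λ') :
    ∃ Λ'' : Matrix α α ℂ →ₗ[ℂ] Matrix (α × α) (α × α) ℂ, IsQuantumChannel Λ'' ∧
      (∀ X, ptr2 (Λ'' X) = ptr2 (Λ' (ptr2 (Λ X)))) ∧ (∀ X, ptr1 (Λ'' X) = ptr1 (Λ' (ptr1 (Λ X)))) := by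
  have a := ch_comp h' ch_ptr2
  have b := ch_comp h' ch_ptr1
  refine ⟨idTensor (ptr1 ∘ₗ Λ') ∘ₗ tensorId (ptr2 ∘ₗ Λ') ∘ₗ Λ,
    ch_comp (ch_comp h (ch_tensorId a)) (ch_idTensor b), fun X => ?_, fun X => ?_⟩
  · rw [LinearMap.comp_apply, LinearMap.comp_apply, ptr2_idTensor b.2, ptr2_tensorId]; rfl
  · rw [LinearMap.comp_apply, LinearMap.comp_apply, ptr1_idTensor, ptr1_tensorId a.2]; rfl

end Marg

section Tens
variable {α β α' β' : Type*} [Fintype α] [DecidableEq α] [Fintype β] [DecidableEq β]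
  [Fintype α'] [DecidableEq α'] [Fintype β'] [DecidableEq β']

lemma tp_apply (P : Matrix α α ℂ →ₗ[ℂ] Matrix α' α' ℂ) (Q : Matrix β β ℂ →ₗ[ℂ] Matrix β' β' ℂ)
    (ρ : Matrix (α × β) (α × β) ℂ) (p q : α' × β') :
    idTensor Q (tensorId P ρ) p q = ∑ b, ∑ b', ∑ a, ∑ a', ρ (a, b) (a', b') *
      P (Matrix.single a a' 1) p.1 q.1 * Q (Matrix.single b b' 1) p.2 q.2 := by
  change Q (Matrix.of fun b b' => P (Matrix.of fun a a' => ρ (a, b) (a', b')) p.1 q.1) p.2 q.2 = _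
  rw [lin_apply Q]
  refine Finset.sum_congr rfl fun b _ => Finset.sum_congr rfl fun b' _ => ?_
  rw [Matrix.of_apply, lin_apply P, Finset.sum_mul]
  refine Finset.sum_congr rfl fun a _ => ?_
  rw [Finset.sum_mul]
  rfl

lemma tp_swap (P : Matrix α α ℂ →ₗ[ℂ] Matrix α' α' ℂ) (Q : Matrix β β ℂ →ₗ[ℂ] Matrix β' β' ℂ)
    (ρ : Matrix (α × β) (α × β) ℂ) :
    tensorId P (idTensor Q ρ) = idTensor Q (tensorId P ρ) := by
  ext p q
  rw [tp_apply]
  change P (Matrix.of fun a a' => Q (Matrix.of fun b b' => ρ (a, b) (a', b')) p.2 q.2) p.1 q.1 = _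
  rw [lin_apply P]
  have : ∀ a a', Q (Matrix.of fun b b' => ρ (a, b) (a', b')) p.2 q.2 =
      ∑ b, ∑ b', ρ (a, b) (a', b') * Q (Matrix.single b b' 1) p.2 q.2 := fun a a' => by
    rw [lin_apply Q]; rfl
  simp only [Matrix.of_apply, this, Finset.sum_mul]
  simp only [← Fintype.sum_prod_type']
  refine Fintype.sum_equiv ⟨fun x => (x.2.2.1, x.2.2.2, x.1, x.2.1),
    fun x => (x.2.2.1, x.2.2.2, x.1, x.2.1), fun _ => rfl, fun _ => rfl⟩ _ _ fun x => ?_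
  simp only [Equiv.coe_fn_mk]
  ring

lemma marg11_tp (Λ : Matrix α α ℂ →ₗ[ℂ] Matrix (α × α) (α × α) ℂ)
    (Γ : Matrix β β ℂ →ₗ[ℂ] Matrix (β × β) (β × β) ℂ) (ρ : Matrix (α × β) (α × β) ℂ) :
    marg11 (idTensor Γ (tensorId Λ ρ)) = idTensor (ptr2 ∘ₗ Γ) (tensorId (ptr2 ∘ₗ Λ) ρ) := by
  ext p q
  change ∑ a₂, ∑ b₂, Γ (Matrix.of fun b b' => Λ (Matrix.of fun a a' => ρ (a, b) (a', b')) (p.1, a₂) (q.1, a₂)) (p.2, b₂) (q.2, b₂)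
    = ptr2 (Γ (Matrix.of fun b b' => ∑ a₂, Λ (Matrix.of fun a a' => ρ (a, b) (a', b')) (p.1, a₂) (q.1, a₂))) p.2 q.2
  have : (Matrix.of fun b b' => ∑ a₂, Λ (Matrix.of fun a a' => ρ (a, b) (a', b')) (p.1, a₂) (q.1, a₂))
      = ∑ a₂, (Matrix.of fun b b' => Λ (Matrix.of fun a a' => ρ (a, b) (a', b')) (p.1, a₂) (q.1, a₂)) := by
    ext i j; rw [Matrix.sum_apply]; rfl
  rw [this, map_sum, map_sum, Matrix.sum_apply]
  rfl

lemma marg22_tp (Λ : Matrix α α ℂ →ₗ[ℂ] Matrix (α × α) (α × α) ℂ)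
    (Γ : Matrix β β ℂ →ₗ[ℂ] Matrix (β × β) (β × β) ℂ) (ρ : Matrix (α × β) (α × β) ℂ) :
    marg22 (idTensor Γ (tensorId Λ ρ)) = idTensor (ptr1 ∘ₗ Γ) (tensorId (ptr1 ∘ₗ Λ) ρ) := by
  ext p q
  change ∑ a₂, ∑ b₂, Γ (Matrix.of fun b b' => Λ (Matrix.of fun a a' => ρ (a, b) (a', b')) (a₂, p.1) (a₂, q.1)) (b₂, p.2) (b₂, q.2)
    = ptr1 (Γ (Matrix.of fun b b' => ∑ a₂, Λ (Matrix.of fun a a' => ρ (a, b) (a', b')) (a₂, p.1) (a₂, q.1))) p.2 q.2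
  have : (Matrix.of fun b b' => ∑ a₂, Λ (Matrix.of fun a a' => ρ (a, b) (a', b')) (a₂, p.1) (a₂, q.1))
      = ∑ a₂, (Matrix.of fun b b' => Λ (Matrix.of fun a a' => ρ (a, b) (a', b')) (a₂, p.1) (a₂, q.1)) := by
    ext i j; rw [Matrix.sum_apply]; rfl
  rw [this, map_sum, map_sum, Matrix.sum_apply]
  rfl

/-- Composition of product maps. -/
lemma tp_comp (P P' : Matrix α α ℂ →ₗ[ℂ] Matrix α α ℂ) (Q Q' : Matrix β β ℂ →ₗ[ℂ] Matrix β β ℂ)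
    (ρ : Matrix (α × β) (α × β) ℂ) :
    idTensor (Q' ∘ₗ Q) (tensorId (P' ∘ₗ P) ρ) =
      idTensor Q' (tensorId P' (idTensor Q (tensorId P ρ))) := by
  rw [tp_swap P' Q]
  rfl

end Tens

section Compactness
variable {α γ : Type*} [Fintype α] [DecidableEq α] [Fintype γ] [DecidableEq γ]

lemma psd_entry_bound {M : Matrix α α ℂ} (h : M.PosSemidef) (i j : α) : ‖M i j‖ ≤ 2 * M.trace.re := by
  have hd : ∀ i, (M i i).re ≤ M.trace.re := by
    intro i
    rw [Matrix.trace, Complex.re_sum]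
    exact Finset.single_le_sum (f := fun i => (M.diag i).re)
      (fun k _ => (Complex.le_def.mp (h.diag_nonneg (i := k))).1) (Finset.mem_univ i)
  obtain ⟨B, hB⟩ := psd_factor h
  have hm : ∀ i, (M i i).re = ∑ k, ‖B k i‖ ^ 2 := by
    intro i
    rw [hB, Matrix.mul_apply, Complex.re_sum]
    refine Finset.sum_congr rfl fun k _ => ?_
    rw [conjTranspose_apply, Complex.sq_norm, Complex.normSq_apply]
    simp
  calc ‖M i j‖ = ‖∑ k, star (B k i) * B k j‖ := by
        conv_lhs => rw [hB, Matrix.mul_apply]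
        rfl
    _ ≤ ∑ k, (‖B k i‖ ^ 2 + ‖B k j‖ ^ 2) := by
        refine (norm_sum_le _ _).trans (Finset.sum_le_sum fun k _ => ?_)
        rw [norm_mul, norm_star]
        nlinarith [sq_nonneg (‖B k i‖ - ‖B k j‖), sq_nonneg (‖B k i‖), sq_nonneg (‖B k j‖)]
    _ = (M i i).re + (M j j).re := by rw [Finset.sum_add_distrib, hm, hm]
    _ ≤ _ := by linarith [hd i, hd j]

lemma channel_bound (X : Matrix α α ℂ) : ∃ R : ℝ, ∀ Λ : Matrix α α ℂ →ₗ[ℂ] Matrix γ γ ℂ,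
    IsQuantumChannel Λ → ∀ i j, ‖Λ X i j‖ ≤ R := by
  induction psd_span X using Submodule.span_induction with
  | mem x hx =>
    refine ⟨2 * x.trace.re, fun Λ h i j => ?_⟩
    rw [← h.2 x]
    exact psd_entry_bound (cp_pos h.1 hx) i j
  | zero => exact ⟨0, fun Λ h i j => by simp⟩
  | add x y _ _ hx hy =>
    obtain ⟨R, hR⟩ := hx
    obtain ⟨S, hS⟩ := hy
    refine ⟨R + S, fun Λ h i j => ?_⟩
    rw [map_add, Matrix.add_apply]
    exact (norm_add_le _ _).trans (add_le_add (hR Λ h i j) (hS Λ h i j))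
  | smul c x _ hx =>
    obtain ⟨R, hR⟩ := hx
    refine ⟨‖c‖ * R, fun Λ h i j => ?_⟩
    rw [map_smul, Matrix.smul_apply, norm_smul]
    exact mul_le_mul_of_nonneg_left (hR Λ h i j) (norm_nonneg _)

lemma isClosed_psd : IsClosed {M : Matrix α α ℂ | M.PosSemidef} := by
  have : {M : Matrix α α ℂ | M.PosSemidef} = {M | Mᴴ = M} ∩
      ⋂ x : α → ℂ, {M | 0 ≤ star x ⬝ᵥ (M *ᵥ x)} := by
    ext M
    simp [posSemidef_iff_dotProduct_mulVec, IsHermitian]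
  rw [this]
  refine IsClosed.inter (isClosed_eq (by fun_prop) (by fun_prop)) (isClosed_iInter fun x => ?_)
  exact isClosed_le continuous_const (by fun_prop)

/-- The channels, as plain functions. -/
def chSet (α γ : Type*) [Fintype α] [DecidableEq α] [Fintype γ] [DecidableEq γ] :
    Set (Matrix α α ℂ → Matrix γ γ ℂ) :=
  {f | ∃ Λ : Matrix α α ℂ →ₗ[ℂ] Matrix γ γ ℂ, IsQuantumChannel Λ ∧ ⇑Λ = f}

lemma isClosed_chSet : IsClosed (chSet α γ) := by
  have : chSet α γ = {f | ∀ X Y, f (X + Y) = f X + f Y} ∩ {f | ∀ (c : ℂ) X, f (c • X) = c • f X} ∩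
      {f | ∀ X, (f X).trace = X.trace} ∩
      {f | ∀ (k : ℕ) (M : Matrix (Fin k × α) (Fin k × α) ℂ), M.PosSemidef →
        (Matrix.of fun p q : Fin k × γ =>
          f (Matrix.of fun b b' => M (p.1, b) (q.1, b')) p.2 q.2) ∈ {M | M.PosSemidef}} := by
    ext f
    constructor
    · rintro ⟨Λ, h, rfl⟩
      exact ⟨⟨⟨fun X Y => map_add _ _ _, fun c X => map_smul _ _ _⟩, h.2⟩, h.1⟩
    · rintro ⟨⟨⟨h1, h2⟩, h3⟩, h4⟩
      exact ⟨{ toFun := f, map_add' := h1, map_smul' := h2 }, ⟨h4, h3⟩, rfl⟩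
  rw [this]
  simp only [Set.ofPred_forall]
  refine IsClosed.inter (IsClosed.inter (IsClosed.inter ?_ ?_) ?_) ?_
  · exact isClosed_iInter fun X => isClosed_iInter fun Y => isClosed_eq (by fun_prop) (by fun_prop)
  · exact isClosed_iInter fun X => isClosed_iInter fun Y => isClosed_eq (by fun_prop) (by fun_prop)
  · exact isClosed_iInter fun X => isClosed_eq (by fun_prop) (by fun_prop)
  · refine isClosed_iInter fun k => isClosed_iInter fun M => isClosed_iInter fun _ => ?_
    refine IsClosed.preimage (f := fun (f : Matrix α α ℂ → Matrix γ γ ℂ) => (Matrix.of fun p q : Fin k × γ =>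
          f (Matrix.of fun b b' => M (p.1, b) (q.1, b')) p.2 q.2)) ?_ isClosed_psd
    refine continuous_matrix fun p q => ?_
    exact ((continuous_apply (Matrix.of fun b b' => M (p.1, b) (q.1, b'))).matrix_elem p.2 q.2)

lemma isCompact_chSet : IsCompact (chSet α γ) := by
  choose R hR using channel_bound (α := α) (γ := γ)
  have hK : IsCompact (Set.pi Set.univ (fun X : Matrix α α ℂ =>
      (Set.pi Set.univ fun _ : γ => Set.pi Set.univ fun _ : γ => Metric.closedBall (0 : ℂ) (R X) :
        Set (Matrix γ γ ℂ)))) :=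
    isCompact_univ_pi fun X => isCompact_univ_pi fun i => isCompact_univ_pi fun j =>
      isCompact_closedBall _ _
  refine hK.of_isClosed_subset isClosed_chSet ?_
  rintro f ⟨Λ, h, rfl⟩ X _ i _ j _
  rw [mem_closedBall_zero_iff]
  exact hR X Λ h i j

end Compactness

section Ellis
variable {α β : Type*} [Fintype α] [DecidableEq α] [Fintype β] [DecidableEq β]

noncomputable instance endTop (X : Type*) [TopologicalSpace X] : TopologicalSpace (Function.End X) :=
  inferInstanceAs (TopologicalSpace (X → X))

instance endT2 (X : Type*) [TopologicalSpace X] [T2Space X] : T2Space (Function.End X) :=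
  inferInstanceAs (T2Space (X → X))

lemma end_cont (X : Type*) [TopologicalSpace X] (r : Function.End X) :
    Continuous (fun f : Function.End X => f * r) := by
  change Continuous (fun (f : X → X) => f ∘ r)
  exact continuous_pi fun x => continuous_apply (r x)

/-- The invariance constraint on plain functions. -/
def invC (ρ : Matrix (α × β) (α × β) ℂ) (P : Matrix α α ℂ → Matrix α α ℂ)
    (Q : Matrix β β ℂ → Matrix β β ℂ) : Prop :=
  ∀ p q : α × β, ∑ b, ∑ b', ∑ a, ∑ a', ρ (a, b) (a', b') *
      P (Matrix.single a a' 1) p.1 q.1 * Q (Matrix.single b b' 1) p.2 q.2 = ρ p q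

lemma invC_iff (ρ : Matrix (α × β) (α × β) ℂ) (P : Matrix α α ℂ →ₗ[ℂ] Matrix α α ℂ)
    (Q : Matrix β β ℂ →ₗ[ℂ] Matrix β β ℂ) : invC ρ P Q ↔ idTensor Q (tensorId P ρ) = ρ := by
  constructor
  · intro h; ext p q; rw [tp_apply]; exact h p q
  · intro h p q; rw [← tp_apply, h]

lemma cont_ptr2 : Continuous (ptr2 : Matrix (α × α) (α × α) ℂ →ₗ[ℂ] Matrix α α ℂ) :=
  continuous_matrix fun i j => continuous_finsetSum _ fun k _ =>
    continuous_id.matrix_elem (i, k) (j, k)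

lemma cont_ptr1 : Continuous (ptr1 : Matrix (α × α) (α × α) ℂ →ₗ[ℂ] Matrix α α ℂ) :=
  continuous_matrix fun i j => continuous_finsetSum _ fun k _ =>
    continuous_id.matrix_elem (k, i) (k, j)

lemma isClosed_invC (ρ : Matrix (α × β) (α × β) ℂ) :
    IsClosed {x : (Matrix α α ℂ → Matrix α α ℂ) × (Matrix β β ℂ → Matrix β β ℂ) | invC ρ x.1 x.2} := by
  unfold invC
  simp only [Set.ofPred_forall]
  refine isClosed_iInter fun p => isClosed_iInter fun q => isClosed_eq ?_ continuous_const
  refine continuous_finsetSum _ fun b _ => continuous_finsetSum _ fun b' _ =>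
    continuous_finsetSum _ fun a _ => continuous_finsetSum _ fun a' _ => ?_
  refine Continuous.mul (continuous_const.mul ?_) ?_
  · exact ((continuous_apply (Matrix.single a a' 1)).comp continuous_fst).matrix_elem p.1 q.1
  · exact ((continuous_apply (Matrix.single b b' 1)).comp continuous_snd).matrix_elem p.2 q.2

lemma ellis (ρ : Matrix (α × β) (α × β) ℂ) (Λ₀ : Matrix α α ℂ →ₗ[ℂ] Matrix (α × α) (α × α) ℂ)
    (Γ₀ : Matrix β β ℂ →ₗ[ℂ] Matrix (β × β) (β × β) ℂ) (hΛ₀ : IsQuantumChannel Λ₀)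
    (hΓ₀ : IsQuantumChannel Γ₀)
    (h1 : idTensor (ptr2 ∘ₗ Γ₀) (tensorId (ptr2 ∘ₗ Λ₀) ρ) = ρ)
    (h2 : idTensor (ptr1 ∘ₗ Γ₀) (tensorId (ptr1 ∘ₗ Λ₀) ρ) = ρ) :
    ∃ (Λ : Matrix α α ℂ →ₗ[ℂ] Matrix (α × α) (α × α) ℂ)
      (Γ : Matrix β β ℂ →ₗ[ℂ] Matrix (β × β) (β × β) ℂ), IsQuantumChannel Λ ∧ IsQuantumChannel Γ ∧
      (∀ X, ptr2 (Λ (ptr2 (Λ X))) = ptr2 (Λ X)) ∧ (∀ X, ptr1 (Λ (ptr1 (Λ X))) = ptr1 (Λ X)) ∧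
      (∀ X, ptr2 (Γ (ptr2 (Γ X))) = ptr2 (Γ X)) ∧ (∀ X, ptr1 (Γ (ptr1 (Γ X))) = ptr1 (Γ X)) ∧
      tensorId (ptr2 ∘ₗ Λ) ρ = ρ ∧ tensorId (ptr1 ∘ₗ Λ) ρ = ρ ∧
      idTensor (ptr2 ∘ₗ Γ) ρ = ρ ∧ idTensor (ptr1 ∘ₗ Γ) ρ = ρ := by
  let G := Function.End (Matrix α α ℂ) × Function.End (Matrix α α ℂ) ×
    Function.End (Matrix β β ℂ) × Function.End (Matrix β β ℂ)
  let F : (Matrix α α ℂ → Matrix (α × α) (α × α) ℂ) × (Matrix β β ℂ → Matrix (β × β) (β × β) ℂ) → G :=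
    fun x => (fun X => ptr2 (x.1 X), fun X => ptr1 (x.1 X), fun X => ptr2 (x.2 X),
      fun X => ptr1 (x.2 X))
  have hF : Continuous F := by
    refine Continuous.prodMk ?_ (Continuous.prodMk ?_ (Continuous.prodMk ?_ ?_))
    · exact continuous_pi fun X => cont_ptr2.comp ((continuous_apply X).comp continuous_fst)
    · exact continuous_pi fun X => cont_ptr1.comp ((continuous_apply X).comp continuous_fst)
    · exact continuous_pi fun X => cont_ptr2.comp ((continuous_apply X).comp continuous_snd)
    · exact continuous_pi fun X => cont_ptr1.comp ((continuous_apply X).comp continuous_snd)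
  let C : Set G := {m | invC ρ m.1 m.2.2.1 ∧ invC ρ m.2.1 m.2.2.2}
  have hC : IsClosed C := by
    refine IsClosed.inter ?_ ?_
    · exact (isClosed_invC ρ).preimage (f := fun m : G => ((m.1 : Matrix α α ℂ → Matrix α α ℂ),
        (m.2.2.1 : Matrix β β ℂ → Matrix β β ℂ)))
        (continuous_fst.prodMk (continuous_fst.comp (continuous_snd.comp continuous_snd)))
    · exact (isClosed_invC ρ).preimage (f := fun m : G => ((m.2.1 : Matrix α α ℂ → Matrix α α ℂ),
        (m.2.2.2 : Matrix β β ℂ → Matrix β β ℂ)))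
        ((continuous_fst.comp continuous_snd).prodMk
          (continuous_snd.comp (continuous_snd.comp continuous_snd)))
  let s : Set G := F '' (chSet α (α × α) ×ˢ chSet β (β × β)) ∩ C
  have hs : IsCompact s := ((isCompact_chSet.prod isCompact_chSet).image hF).inter_right hC
  have hne : s.Nonempty := by
    refine ⟨F (Λ₀, Γ₀), ⟨(Λ₀, Γ₀), ⟨⟨Λ₀, hΛ₀, rfl⟩, ⟨Γ₀, hΓ₀, rfl⟩⟩, rfl⟩, ?_, ?_⟩
    · exact (invC_iff ρ (ptr2 ∘ₗ Λ₀) (ptr2 ∘ₗ Γ₀)).mpr h1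
    · exact (invC_iff ρ (ptr1 ∘ₗ Λ₀) (ptr1 ∘ₗ Γ₀)).mpr h2
  have hcont : ∀ r : G, Continuous (fun m : G => m * r) := by
    intro r
    refine Continuous.prodMk ?_ (Continuous.prodMk ?_ (Continuous.prodMk ?_ ?_))
    · exact (end_cont _ r.1).comp continuous_fst
    · exact (end_cont _ r.2.1).comp (continuous_fst.comp continuous_snd)
    · exact (end_cont _ r.2.2.1).comp (continuous_fst.comp (continuous_snd.comp continuous_snd))
    · exact (end_cont _ r.2.2.2).comp (continuous_snd.comp (continuous_snd.comp continuous_snd))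
  have hmul : ∀ᵉ (x ∈ s) (y ∈ s), x * y ∈ s := by
    rintro x ⟨⟨⟨f', g'⟩, ⟨⟨Λ', hΛ', rfl⟩, ⟨Γ', hΓ', rfl⟩⟩, rfl⟩, cx1, cx2⟩
      y ⟨⟨⟨f, g⟩, ⟨⟨Λ, hΛ, rfl⟩, ⟨Γ, hΓ, rfl⟩⟩, rfl⟩, cy1, cy2⟩
    obtain ⟨L, hL, hL2, hL1⟩ := broadcast_comp hΛ hΛ'
    obtain ⟨M, hM, hM2, hM1⟩ := broadcast_comp hΓ hΓ'
    refine ⟨⟨(L, M), ⟨⟨L, hL, rfl⟩, ⟨M, hM, rfl⟩⟩, ?_⟩, ?_, ?_⟩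
    · exact Prod.ext (funext hL2) (Prod.ext (funext hL1) (Prod.ext (funext hM2) (funext hM1)))
    · have cx := (invC_iff ρ (ptr2 ∘ₗ Λ') (ptr2 ∘ₗ Γ')).mp cx1
      have cy := (invC_iff ρ (ptr2 ∘ₗ Λ) (ptr2 ∘ₗ Γ)).mp cy1
      exact (invC_iff ρ ((ptr2 ∘ₗ Λ') ∘ₗ (ptr2 ∘ₗ Λ)) ((ptr2 ∘ₗ Γ') ∘ₗ (ptr2 ∘ₗ Γ))).mpr (by
        rw [tp_comp, cy, cx])
    · have cx := (invC_iff ρ (ptr1 ∘ₗ Λ') (ptr1 ∘ₗ Γ')).mp cx2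
      have cy := (invC_iff ρ (ptr1 ∘ₗ Λ) (ptr1 ∘ₗ Γ)).mp cy2
      exact (invC_iff ρ ((ptr1 ∘ₗ Λ') ∘ₗ (ptr1 ∘ₗ Λ)) ((ptr1 ∘ₗ Γ') ∘ₗ (ptr1 ∘ₗ Γ))).mpr (by
        rw [tp_comp, cy, cx])
  obtain ⟨m, ⟨⟨⟨f, g⟩, ⟨⟨Λ, hΛ, rfl⟩, ⟨Γ, hΓ, rfl⟩⟩, rfl⟩, c1, c2⟩, hidem⟩ :=
    exists_idempotent_in_compact_subsemigroup hcont s hne hs hmul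
  have i1 : ∀ X, ptr2 (Λ (ptr2 (Λ X))) = ptr2 (Λ X) :=
    fun X => congrFun (congrArg (fun m : G => m.1) hidem) X
  have i2 : ∀ X, ptr1 (Λ (ptr1 (Λ X))) = ptr1 (Λ X) :=
    fun X => congrFun (congrArg (fun m : G => m.2.1) hidem) X
  have i3 : ∀ X, ptr2 (Γ (ptr2 (Γ X))) = ptr2 (Γ X) :=
    fun X => congrFun (congrArg (fun m : G => m.2.2.1) hidem) X
  have i4 : ∀ X, ptr1 (Γ (ptr1 (Γ X))) = ptr1 (Γ X) :=
    fun X => congrFun (congrArg (fun m : G => m.2.2.2) hidem) X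
  have gen : ∀ (P : Matrix α α ℂ →ₗ[ℂ] Matrix α α ℂ) (Q : Matrix β β ℂ →ₗ[ℂ] Matrix β β ℂ),
      (∀ X, P (P X) = P X) → (∀ X, Q (Q X) = Q X) → idTensor Q (tensorId P ρ) = ρ →
      tensorId P ρ = ρ ∧ idTensor Q ρ = ρ := by
    intro P Q hP hQ h
    constructor
    · conv_lhs => rw [← h, tp_swap]
      have : tensorId P (tensorId P ρ) = tensorId P ρ := by
        ext p q
        exact congrFun (congrFun (hP (Matrix.of fun a a' => ρ (a, p.2) (a', q.2))) p.1) q.1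
      rw [this, h]
    · conv_lhs => rw [← h]
      have : idTensor Q (idTensor Q (tensorId P ρ)) = idTensor Q (tensorId P ρ) := by
        ext p q
        exact congrFun (congrFun (hQ (Matrix.of fun b b' => tensorId P ρ (p.1, b) (q.1, b'))) p.2) q.2
      rw [this, h]
  obtain ⟨a1, b1⟩ := gen (ptr2 ∘ₗ Λ) (ptr2 ∘ₗ Γ) i1 i3 ((invC_iff ρ (ptr2 ∘ₗ Λ) (ptr2 ∘ₗ Γ)).mp c1)
  obtain ⟨a2, b2⟩ := gen (ptr1 ∘ₗ Λ) (ptr1 ∘ₗ Γ) i2 i4 ((invC_iff ρ (ptr1 ∘ₗ Λ) (ptr1 ∘ₗ Γ)).mp c2)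
  exact ⟨Λ, Γ, hΛ, hΓ, i1, i2, i3, i4, a1, a2, b1, b2⟩

end Ellis

section SimDiag
variable {α : Type*} [Fintype α] [DecidableEq α]

open Classical in
lemma sim_diag {κ : Type*} (T : κ → Matrix α α ℂ) (hT : ∀ k, (T k).IsHermitian)
    (hc : ∀ k l, T k * T l = T l * T k) :
    ∃ av : α → α → ℂ, (∀ i i', star (av i) ⬝ᵥ av i' = if i = i' then 1 else 0) ∧
      ∀ k i, ∃ c : ℂ, T k *ᵥ av i = c • av i := by
  let S : κ → EuclideanSpace ℂ α →ₗ[ℂ] EuclideanSpace ℂ α := fun k => Matrix.toEuclideanLin (T k)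
  have hS : ∀ k, (S k).IsSymmetric := fun k => Matrix.isSymmetric_toEuclideanLin_iff.mpr (hT k)
  have hSc : Pairwise (Function.onFun Commute S) := by
    intro k l _
    change S k * S l = S l * S k
    ext v i
    have := congrArg (fun M => (M *ᵥ v.ofLp) i) (hc k l)
    simpa [S, Matrix.toEuclideanLin, Matrix.mulVec_mulVec] using this
  let V : (κ → ℂ) → Submodule ℂ (EuclideanSpace ℂ α) := fun χ => ⨅ j, Module.End.eigenspace (S j) (χ j)
  have hV : OrthogonalFamily ℂ (fun χ => V χ) fun χ => (V χ).subtypeₗᵢ :=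
    LinearMap.IsSymmetric.orthogonalFamily_iInf_eigenspaces hS
  have hI : DirectSum.IsInternal V := by
    rw [OrthogonalFamily.isInternal_iff hV,
      LinearMap.IsSymmetric.iSup_iInf_eq_top_of_commute hS hSc, Submodule.top_orthogonal_eq_bot]
  have hI2 := (DirectSum.isInternal_ne_bot_iff).mpr hI
  have : Finite {χ // V χ ≠ ⊥} :=
    WellFoundedGT.finite_ne_bot_of_iSupIndep hI.submodule_iSupIndep
  have : Fintype {χ // V χ ≠ ⊥} := Fintype.ofFinite _
  have hV2 : OrthogonalFamily ℂ (fun χ : {χ // V χ ≠ ⊥} => V χ) fun χ => (V χ).subtypeₗᵢ :=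
    hV.comp Subtype.val_injective
  have hn : Module.finrank ℂ (EuclideanSpace ℂ α) = Fintype.card α := finrank_euclideanSpace
  let b := (hI2.subordinateOrthonormalBasis hn hV2).reindex (Fintype.equivFin α).symm
  refine ⟨fun i => (b i).ofLp, ?_, ?_⟩
  · intro i i'
    have := orthonormal_iff_ite.mp b.orthonormal i i'
    rw [EuclideanSpace.inner_eq_star_dotProduct, dotProduct_comm] at this
    exact this
  · intro k i
    have := hI2.subordinateOrthonormalBasis_subordinate hn (Fintype.equivFin α i) hV2
    have hb : b i = hI2.subordinateOrthonormalBasis hn hV2 (Fintype.equivFin α i) := by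
      simp [b]
    rw [← hb] at this
    have h2 := (Submodule.mem_iInf _).mp this k
    rw [Module.End.mem_eigenspace_iff] at h2
    exact ⟨_, congrArg WithLp.ofLp h2⟩

end SimDiag

section Forward
variable {α β : Type*} [Fintype α] [DecidableEq α] [Fintype β] [DecidableEq β]

/-- The block of `ρ` at position `b, b'` of the second factor. -/
def blk (ρ : Matrix (α × β) (α × β) ℂ) (b b' : β) : Matrix α α ℂ :=
  Matrix.of fun a a' => ρ (a, b) (a', b')

/-- Compression of `ρ` to the vector `v` of the second factor. -/
noncomputable def tau (ρ : Matrix (α × β) (α × β) ℂ) (v : β → ℂ) : Matrix α α ℂ :=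
  ∑ b, ∑ b', (star (v b) * v b') • blk ρ b b'

lemma tau_psd {ρ : Matrix (α × β) (α × β) ℂ} (h : ρ.PosSemidef) (v : β → ℂ) :
    (tau ρ v).PosSemidef := by
  have : tau ρ v = (Matrix.of fun (x : α × β) (a : α) => if x.1 = a then v x.2 else 0)ᴴ * ρ *
      (Matrix.of fun (x : α × β) (a : α) => if x.1 = a then v x.2 else 0) := by
    ext a a'
    simp only [tau, blk, Matrix.sum_apply, Matrix.smul_apply, Matrix.of_apply, smul_eq_mul,
      Matrix.mul_apply, Matrix.conjTranspose_apply, Fintype.sum_prod_type, apply_ite star, star_zero,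
      ite_mul, mul_ite, zero_mul, mul_zero, Finset.sum_mul]
    rw [Finset.sum_comm, Finset.sum_comm (γ := β)]
    simp only [Finset.sum_ite_irrel, Finset.sum_const_zero, Finset.sum_ite_eq, Finset.sum_ite_eq',
      Finset.mem_univ, if_true]
    rw [Finset.sum_comm]
    refine Finset.sum_congr rfl fun b' _ => Finset.sum_congr rfl fun b _ => ?_
    ring
  rw [this]
  exact h.conjTranspose_mul_mul_same _

lemma tau_fix {ρ : Matrix (α × β) (α × β) ℂ} {P : Matrix α α ℂ →ₗ[ℂ] Matrix α α ℂ}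
    (h : tensorId P ρ = ρ) (v : β → ℂ) : P (tau ρ v) = tau ρ v := by
  have hb : ∀ b b', P (blk ρ b b') = blk ρ b b' := by
    intro b b'
    ext a a'
    exact congrFun (congrFun h (a, b)) (a', b')
  simp only [tau, map_sum, _root_.map_smul, hb]

lemma eq_zero_of_quad (M : Matrix β β ℂ) (h : ∀ v : β → ℂ, star v ⬝ᵥ (M *ᵥ v) = 0) : M = 0 := by
  have : Matrix.toEuclideanLin M = 0 := by
    rw [← inner_map_self_eq_zero]
    intro x
    rw [← inner_conj_symm]
    have : inner ℂ x (Matrix.toEuclideanLin M x) = 0 := by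
      rw [EuclideanSpace.inner_eq_star_dotProduct, dotProduct_comm]
      exact h x.ofLp
    rw [this, map_zero]
  simpa using this

lemma side {ρ : Matrix (α × β) (α × β) ℂ} (hρ : ρ.PosSemidef)
    {Λ : Matrix α α ℂ →ₗ[ℂ] Matrix (α × α) (α × α) ℂ} (h : IsQuantumChannel Λ)
    (h1 : ∀ X, ptr2 (Λ (ptr2 (Λ X))) = ptr2 (Λ X)) (h2 : ∀ X, ptr1 (Λ (ptr1 (Λ X))) = ptr1 (Λ X))
    (f1 : tensorId (ptr2 ∘ₗ Λ) ρ = ρ) (f2 : tensorId (ptr1 ∘ₗ Λ) ρ = ρ) :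
    ∃ av : α → α → ℂ, (∀ i i', star (av i) ⬝ᵥ av i' = if i = i' then 1 else 0) ∧
      ∀ i i', i ≠ i' → ∀ b b', star (av i) ⬝ᵥ (blk ρ b b' *ᵥ av i') = 0 := by
  obtain ⟨av, ho, he⟩ := sim_diag (tau ρ) (fun v => (tau_psd hρ v).isHermitian)
    (fun v w => channel_commute h h1 h2 (tau_psd hρ v) (tau_psd hρ w) (tau_fix f1 v) (tau_fix f2 v)
      (tau_fix f1 w) (tau_fix f2 w))
  refine ⟨av, ho, fun i i' hi => ?_⟩
  have hM : (Matrix.of fun b b' => star (av i) ⬝ᵥ (blk ρ b b' *ᵥ av i')) = 0 := by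
    refine eq_zero_of_quad _ fun v => ?_
    have : star (av i) ⬝ᵥ (tau ρ v *ᵥ av i') = 0 := by
      obtain ⟨c, hc⟩ := he v i'
      rw [hc, dotProduct_smul, ho, if_neg hi, smul_zero]
    rw [← this]
    simp only [tau, Matrix.sum_mulVec, dotProduct_sum, Matrix.smul_mulVec, dotProduct_smul]
    rw [dotProduct]
    refine Finset.sum_congr rfl fun b _ => ?_
    rw [Matrix.mulVec, dotProduct, Finset.mul_sum]
    refine Finset.sum_congr rfl fun b' _ => ?_
    simp only [Matrix.of_apply, Pi.star_apply, smul_eq_mul]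
    ring
  intro b b'
  exact congrFun (congrFun hM b) b'

/-- The unitary matrix whose columns are a given orthonormal family. -/
lemma unit_of_on {av : α → α → ℂ} (h : ∀ i i', star (av i) ⬝ᵥ av i' = if i = i' then 1 else 0) :
    (Matrix.of fun a i => av i a)ᴴ * (Matrix.of fun a i => av i a) = 1 := by
  ext i i'
  rw [Matrix.mul_apply, Matrix.one_apply, ← h i i']
  rfl

lemma forward {ρ : Matrix (α × β) (α × β) ℂ} (hρ : IsDensityMatrix ρ)
    {av : α → α → ℂ} (ho : ∀ i i', star (av i) ⬝ᵥ av i' = if i = i' then 1 else 0)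
    (hz : ∀ i i', i ≠ i' → ∀ b b', star (av i) ⬝ᵥ (blk ρ b b' *ᵥ av i') = 0)
    {bv : β → β → ℂ} (ho' : ∀ i i', star (bv i) ⬝ᵥ bv i' = if i = i' then 1 else 0)
    (hz' : ∀ i i', i ≠ i' → ∀ b b', star (bv i) ⬝ᵥ
      (blk (ρ.submatrix Prod.swap Prod.swap) b b' *ᵥ bv i') = 0) : ClassicalClassical ρ := by
  let A : Matrix α α ℂ := Matrix.of fun a i => av i a
  let B : Matrix β β ℂ := Matrix.of fun a i => bv i a
  let W := A ⊗ₖ B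
  have hA : Aᴴ * A = 1 := unit_of_on ho
  have hB : Bᴴ * B = 1 := unit_of_on ho'
  have hW : Wᴴ * W = 1 := by
    rw [Matrix.conjTranspose_kronecker, ← Matrix.mul_kronecker_mul, hA, hB, Matrix.one_kronecker_one]
  have hW' : W * Wᴴ = 1 := mul_eq_one_comm.mp hW
  let D := Wᴴ * ρ * W
  have hD : D.PosSemidef := hρ.1.conjTranspose_mul_mul_same _
  have hDρ : ρ = W * D * Wᴴ := by
    simp only [D]
    rw [show W * (Wᴴ * ρ * W) * Wᴴ = (W * Wᴴ) * ρ * (W * Wᴴ) by simp only [Matrix.mul_assoc], hW']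
    simp
  have htr : D.trace = 1 := by
    rw [Matrix.trace_mul_cycle, hW', Matrix.one_mul, hρ.2]
  have hent : ∀ i j i' j', D (i, j) (i', j') = ∑ b', (∑ b, star (bv j b) *
      star (av i) ⬝ᵥ (blk ρ b b' *ᵥ av i')) * bv j' b' := by
    intro i j i' j'
    simp only [D, W, A, B, Matrix.mul_apply, Matrix.conjTranspose_apply, Matrix.kroneckerMap_apply,
      Matrix.of_apply, Fintype.sum_prod_type, Matrix.mulVec, dotProduct, blk, Finset.mul_sum,
      Finset.sum_mul, Pi.star_apply, star_mul']
    rw [Finset.sum_comm]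
    refine Finset.sum_congr rfl fun b' _ => ?_
    rw [Finset.sum_comm]
    conv_rhs => rw [Finset.sum_comm]
    refine Finset.sum_congr rfl fun a _ => ?_
    rw [Finset.sum_comm]
    refine Finset.sum_congr rfl fun b _ => Finset.sum_congr rfl fun a' _ => ?_
    ring
  have hent' : ∀ i j i' j', D (i, j) (i', j') = ∑ b', (∑ b, star (av i b) *
      star (bv j) ⬝ᵥ (blk (ρ.submatrix Prod.swap Prod.swap) b b' *ᵥ bv j')) * av i' b' := by
    intro i j i' j'
    simp only [D, W, A, B, Matrix.mul_apply, Matrix.conjTranspose_apply, Matrix.kroneckerMap_apply,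
      Matrix.of_apply, Fintype.sum_prod_type, Matrix.mulVec, dotProduct, blk, Finset.mul_sum,
      Finset.sum_mul, Pi.star_apply, star_mul', Matrix.submatrix_apply, Prod.swap_prod_mk]
    refine Finset.sum_congr rfl fun a' _ => ?_
    rw [Finset.sum_comm]
    refine Finset.sum_congr rfl fun a _ => ?_
    rw [Finset.sum_comm]
    refine Finset.sum_congr rfl fun b _ => Finset.sum_congr rfl fun b' _ => ?_
    ring
  have hdiag : ∀ x y, x ≠ y → D x y = 0 := by
    rintro ⟨i, j⟩ ⟨i', j'⟩ hne
    by_cases hi : i = i'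
    · have hj : j ≠ j' := fun hj => hne (by rw [hi, hj])
      rw [hent']
      simp only [hz' j j' hj, mul_zero, Finset.sum_const_zero, zero_mul]
    · rw [hent]
      simp only [hz i i' hi, mul_zero, Finset.sum_const_zero, zero_mul]
  have hreal : ∀ x, ((D x x).re : ℂ) = D x x := by
    intro x
    have := hD.diag_nonneg (i := x)
    exact (Complex.eq_re_of_ofReal_le (r := 0) (by simpa using this)).symm
  refine ⟨fun i j => (D (i, j) (i, j)).re, av, bv, ?_, ?_, ho, ho', ?_⟩
  · intro i j
    exact (Complex.le_def.mp (hD.diag_nonneg (i := (i, j)))).1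
  · have : ((∑ i, ∑ j, (D (i, j) (i, j)).re : ℝ) : ℂ) = 1 := by
      push_cast
      simp only [hreal]
      rw [← htr, Matrix.trace, Fintype.sum_prod_type]
      rfl
    exact_mod_cast this
  · simp only [hreal]
    ext ⟨a, b⟩ ⟨a', b'⟩
    have hD' : D = Matrix.diagonal (fun x => D x x) := by
      ext x y
      by_cases hxy : x = y
      · rw [hxy, Matrix.diagonal_apply_eq]
      · rw [Matrix.diagonal_apply_ne _ hxy, hdiag x y hxy]
    conv_lhs => rw [hDρ, hD']
    rw [Matrix.mul_apply, Fintype.sum_prod_type]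
    simp only [Matrix.mul_diagonal, Matrix.sum_apply, Matrix.smul_apply, Matrix.kroneckerMap_apply,
      Matrix.vecMulVec_apply, W, A, B, Matrix.conjTranspose_apply, Matrix.of_apply, star_mul',
      Pi.star_apply, smul_eq_mul]
    refine Finset.sum_congr rfl fun i _ => Finset.sum_congr rfl fun j _ => ?_
    ring

end Forward

section Backward
variable {α β γ : Type*} [Fintype α] [DecidableEq α] [Fintype β] [DecidableEq β]
  [Fintype γ] [DecidableEq γ]

/-- The completely positive map with a given family of Kraus operators. -/
noncomputable def kraus (K : α → Matrix γ α ℂ) : Matrix α α ℂ →ₗ[ℂ] Matrix γ γ ℂ where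
  toFun X := ∑ i, K i * X * (K i)ᴴ
  map_add' X Y := by simp only [Matrix.mul_add, Matrix.add_mul, Finset.sum_add_distrib]
  map_smul' c X := by simp only [Matrix.mul_smul, Matrix.smul_mul, Finset.smul_sum, RingHom.id_apply]

lemma kraus_apply (K : α → Matrix γ α ℂ) (X : Matrix α α ℂ) :
    kraus K X = ∑ i, K i * X * (K i)ᴴ := rfl

lemma kraus_cp (K : α → Matrix γ α ℂ) : IsCompletelyPositive (kraus K) := by
  intro k M hM
  have : idTensor (kraus K) M = ∑ i, ((1 : Matrix (Fin k) (Fin k) ℂ) ⊗ₖ K i) * M *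
      ((1 : Matrix (Fin k) (Fin k) ℂ) ⊗ₖ K i)ᴴ := by
    ext ⟨p, x⟩ ⟨q, y⟩
    change kraus K (Matrix.of fun b b' => M (p, b) (q, b')) x y = _
    rw [kraus_apply, Matrix.sum_apply, Matrix.sum_apply]
    refine Finset.sum_congr rfl fun i _ => ?_
    simp [Matrix.mul_apply, Fintype.sum_prod_type, Matrix.one_apply, Finset.sum_mul,
      Finset.sum_ite_irrel, apply_ite (starRingEnd ℂ)]
  rw [this]
  exact Matrix.posSemidef_sum _ fun i _ => hM.mul_mul_conjTranspose_same _

lemma kraus_ch (K : α → Matrix γ α ℂ) (h : ∑ i, (K i)ᴴ * K i = 1) : IsQuantumChannel (kraus K) := by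
  refine ⟨kraus_cp K, fun X => ?_⟩
  rw [kraus_apply, Matrix.trace_sum]
  rw [Finset.sum_congr rfl fun i _ => Matrix.trace_mul_cycle (K i) X (K i)ᴴ]
  rw [← Matrix.trace_sum, ← Finset.sum_mul, h, Matrix.one_mul]

lemma on_complete {av : α → α → ℂ} (h : ∀ i i', star (av i) ⬝ᵥ av i' = if i = i' then 1 else 0) :
    ∑ i, vecMulVec (av i) (star (av i)) = 1 := by
  rw [← mul_eq_one_comm.mp (unit_of_on h)]
  ext a a'
  simp [Matrix.sum_apply, Matrix.mul_apply, Matrix.vecMulVec_apply]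

/-- Broadcasting channel for an orthonormal basis. -/
lemma exists_broadcast {av : α → α → ℂ}
    (h : ∀ i i', star (av i) ⬝ᵥ av i' = if i = i' then 1 else 0) :
    ∃ Λ : Matrix α α ℂ →ₗ[ℂ] Matrix (α × α) (α × α) ℂ, IsQuantumChannel Λ ∧
      ∀ i, ptr2 (Λ (vecMulVec (av i) (star (av i)))) = vecMulVec (av i) (star (av i)) ∧
        ptr1 (Λ (vecMulVec (av i) (star (av i)))) = vecMulVec (av i) (star (av i)) := by
  let w : α → α × α → ℂ := fun i x => av i x.1 * av i x.2
  have hw : ∀ i, star (w i) ⬝ᵥ w i = 1 := by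
    intro i
    have h1 := h i i
    rw [if_pos rfl] at h1
    calc star (w i) ⬝ᵥ w i = (star (av i) ⬝ᵥ av i) * (star (av i) ⬝ᵥ av i) := by
          simp only [dotProduct, Fintype.sum_prod_type, Finset.sum_mul_sum, w, Pi.star_apply, star_mul']
          refine Finset.sum_congr rfl fun a _ => Finset.sum_congr rfl fun b _ => ?_
          ring
      _ = 1 := by rw [h1, mul_one]
  have hval : ∀ i, kraus (fun i => vecMulVec (w i) (star (av i))) (vecMulVec (av i) (star (av i)))
      = vecMulVec (w i) (star (w i)) := by
    intro i
    rw [kraus_apply, Finset.sum_eq_single i]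
    · rw [Matrix.vecMulVec_mul_vecMulVec, Matrix.conjTranspose_vecMulVec, star_star,
        h i i, if_pos rfl, one_smul, Matrix.vecMulVec_mul_vecMulVec, h i i, if_pos rfl, one_smul]
    · intro j _ hj
      rw [Matrix.vecMulVec_mul_vecMulVec, h j i, if_neg hj, zero_smul]
      have : vecMulVec (w j) (0 : α → ℂ) = 0 := by
        ext x y
        simp [Matrix.vecMulVec_apply]
      rw [this, Matrix.zero_mul]
    · simp
  have hs : ∀ i, ∑ k, av i k * star (av i k) = 1 := by
    intro i
    have h1 := h i i
    rw [if_pos rfl, dotProduct_comm] at h1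
    exact h1
  refine ⟨kraus (fun i => vecMulVec (w i) (star (av i))), kraus_ch _ ?_, fun i => ⟨?_, ?_⟩⟩
  · rw [← on_complete h]
    refine Finset.sum_congr rfl fun i _ => ?_
    rw [Matrix.conjTranspose_vecMulVec, star_star, Matrix.vecMulVec_mul_vecMulVec, hw]
    simp
  · rw [hval]
    ext a a'
    rw [ptr2_apply, Matrix.vecMulVec_apply, ← mul_one (_ * _), ← hs i, Finset.mul_sum]
    refine Finset.sum_congr rfl fun k _ => ?_
    simp only [Matrix.vecMulVec_apply, w, Pi.star_apply, star_mul']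
    ring
  · rw [hval]
    ext a a'
    rw [ptr1_apply, Matrix.vecMulVec_apply, ← mul_one (_ * _), ← hs i, Finset.mul_sum]
    refine Finset.sum_congr rfl fun k _ => ?_
    simp only [Matrix.vecMulVec_apply, w, Pi.star_apply, star_mul']
    ring

lemma tp_kron (P : Matrix α α ℂ →ₗ[ℂ] Matrix α α ℂ) (Q : Matrix β β ℂ →ₗ[ℂ] Matrix β β ℂ)
    (X : Matrix α α ℂ) (Y : Matrix β β ℂ) :
    idTensor Q (tensorId P (X ⊗ₖ Y)) = P X ⊗ₖ Q Y := by
  have h1 : tensorId P (X ⊗ₖ Y) = P X ⊗ₖ Y := by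
    ext ⟨a, b⟩ ⟨a', b'⟩
    change P (Matrix.of fun x x' => X x x' * Y b b') a a' = P X a a' * Y b b'
    have : (Matrix.of fun x x' => X x x' * Y b b') = Y b b' • X := by
      ext x x'
      simp [mul_comm]
    rw [this, _root_.map_smul, Matrix.smul_apply, smul_eq_mul, mul_comm]
  rw [h1]
  ext ⟨a, b⟩ ⟨a', b'⟩
  change Q (Matrix.of fun x x' => P X a a' * Y x x') b b' = P X a a' * Q Y b b'
  have : (Matrix.of fun x x' => P X a a' * Y x x') = P X a a' • Y := rfl
  rw [this, _root_.map_smul, Matrix.smul_apply, smul_eq_mul]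

end Backward
/-- **No-local-broadcasting theorem.** A bipartite state `ρ_{AB}` can be locally
broadcast (there are local channels `Λ : A → A₁A₂` and `Γ : B → B₁B₂` such that the
`A₁B₁` and `A₂B₂` marginals of `(Λ ⊗ Γ)[ρ_{AB}]` both equal `ρ_{AB}`) if and only if
`ρ_{AB}` is classical-classical. -/
theorem no_local_broadcasting {α β : Type*} [Fintype α] [DecidableEq α]
    [Fintype β] [DecidableEq β]
    (ρ : Matrix (α × β) (α × β) ℂ) (hρ : IsDensityMatrix ρ) :
    (∃ (Λ : Matrix α α ℂ →ₗ[ℂ] Matrix (α × α) (α × α) ℂ)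
        (Γ : Matrix β β ℂ →ₗ[ℂ] Matrix (β × β) (β × β) ℂ),
        IsQuantumChannel Λ ∧ IsQuantumChannel Γ ∧
        marg11 (idTensor Γ (tensorId Λ ρ)) = ρ ∧
        marg22 (idTensor Γ (tensorId Λ ρ)) = ρ) ↔
      ClassicalClassical ρ := by

  constructor
  · rintro ⟨Λ₀, Γ₀, hΛ₀, hΓ₀, m1, m2⟩
    rw [marg11_tp] at m1
    rw [marg22_tp] at m2
    obtain ⟨Λ, Γ, hΛ, hΓ, i1, i2, i3, i4, a1, a2, b1, b2⟩ := ellis ρ Λ₀ Γ₀ hΛ₀ hΓ₀ m1 m2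
    obtain ⟨av, ho, hz⟩ := side hρ.1 hΛ i1 i2 a1 a2
    have hswap : ∀ Q : Matrix β β ℂ →ₗ[ℂ] Matrix β β ℂ, idTensor Q ρ = ρ →
        tensorId Q (ρ.submatrix Prod.swap Prod.swap) = ρ.submatrix Prod.swap Prod.swap := by
      intro Q hQ
      ext ⟨b, a⟩ ⟨b', a'⟩
      exact congrFun (congrFun hQ (a, b)) (a', b')
    obtain ⟨bv, ho', hz'⟩ := side (hρ.1.submatrix Prod.swap) hΓ i3 i4 (hswap _ b1) (hswap _ b2)
    exact forward hρ ho hz ho' hz'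
  · rintro ⟨p, av, bv, -, -, ho, ho', hr⟩
    obtain ⟨Λ, hΛ, fΛ⟩ := exists_broadcast ho
    obtain ⟨Γ, hΓ, fΓ⟩ := exists_broadcast ho'
    refine ⟨Λ, Γ, hΛ, hΓ, ?_, ?_⟩
    · rw [marg11_tp, hr]
      simp only [map_sum, _root_.map_smul, tp_kron, LinearMap.comp_apply, (fΛ _).1, (fΓ _).1]
    · rw [marg22_tp, hr]
      simp only [map_sum, _root_.map_smul, tp_kron, LinearMap.comp_apply, (fΛ _).2, (fΓ _).2]
end

section
/- (Petz recovery) Let ρ, σ be density matrices with supp(ρ) ⊆ supp(σ) and Γ a quantum channel. The Petz map R^P_{σ,Γ}[τ] := σ^{1/2} Γ†[(Γ[σ])^{−1/2} τ (Γ[σ])^{−1/2}] σ^{1/2} (with Γ† the adjoint map of Γ, and inverses taken on supports) is a completely positive trace-preserving map on the relevant supports satisfying (R^P∘Γ)[σ] = σ; moreover, if S(ρ‖σ) = S(Γ[ρ]‖Γ[σ]) then (R^P∘Γ)[ρ] = ρ, i.e., equality in the data-processing inequality implies perfect recoverability by the Petz map. -/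
open Matrix Kronecker ComplexOrder

section Defs
variable {α α' β β' γ : Type*} [Fintype α] [DecidableEq α] [Fintype α'] [DecidableEq α']
  [Fintype β] [DecidableEq β] [Fintype β'] [DecidableEq β'] [Fintype γ] [DecidableEq γ]

/-- The base-2 matrix logarithm of a Hermitian matrix, via the spectral decomposition
(with the convention `log 0 = 0` on the kernel; junk value `0` for non-Hermitian input). -/
noncomputable def mlog2 (A : Matrix β β ℂ) : Matrix β β ℂ :=
  if h : A.IsHermitian then
    (h.eigenvectorUnitary : Matrix β β ℂ) *
      Matrix.diagonal (fun i => (Real.logb 2 (h.eigenvalues i) : ℂ)) *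
      (star h.eigenvectorUnitary : Matrix β β ℂ)
  else 0

/-- The relative entropy `S(ρ‖σ) = Tr(ρ log₂ ρ) - Tr(ρ log₂ σ)`
(for `supp ρ ⊆ supp σ`). -/
noncomputable def relEnt (ρ σ : Matrix β β ℂ) : ℝ :=
  ((ρ * mlog2 ρ).trace - (ρ * mlog2 σ).trace).re

/-- Functional calculus for Hermitian matrices via the spectral decomposition
(junk value `0` for non-Hermitian input). -/
noncomputable def matFun (f : ℝ → ℝ) (A : Matrix β β ℂ) : Matrix β β ℂ :=
  if h : A.IsHermitian then
    (h.eigenvectorUnitary : Matrix β β ℂ) *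
      Matrix.diagonal (fun i => (f (h.eigenvalues i) : ℂ)) *
      (star h.eigenvectorUnitary : Matrix β β ℂ)
  else 0

/-- The orthogonal projection onto the support of a Hermitian matrix. -/
noncomputable def suppProj (A : Matrix β β ℂ) : Matrix β β ℂ :=
  matFun (fun x => if x = 0 then 0 else 1) A

/-- The inverse square root on the support of a Hermitian matrix
(recall `(√0)⁻¹ = 0` in Lean's conventions). -/
noncomputable def invSqrt (A : Matrix β β ℂ) : Matrix β β ℂ :=
  matFun (fun x => (Real.sqrt x)⁻¹) A

end Defs

/-- The Petz recovery map
`R^P_{σ,Γ}[τ] = σ^{1/2} Γ†[(Γ[σ])^{-1/2} τ (Γ[σ])^{-1/2}] σ^{1/2}`,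
with inverses taken on supports. -/
noncomputable def petzMap {n m : Type*} [Fintype n] [DecidableEq n]
    [Fintype m] [DecidableEq m]
    (σ : Matrix n n ℂ) (Γ : Matrix n n ℂ →ₗ[ℂ] Matrix m m ℂ)
    (Γdag : Matrix m m ℂ →ₗ[ℂ] Matrix n n ℂ) :
    Matrix m m ℂ →ₗ[ℂ] Matrix n n ℂ where
  toFun τ := matFun Real.sqrt σ *
      Γdag (invSqrt (Γ σ) * τ * invSqrt (Γ σ)) * matFun Real.sqrt σ
  map_add' τ τ' := by
    simp only [mul_add, add_mul, map_add]
  map_smul' c τ := by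
    simp only [Matrix.mul_smul, Matrix.smul_mul, _root_.map_smul, RingHom.id_apply]

section Helpers
set_option linter.unusedSectionVars false
open Polynomial in
lemma cauchy_interp (S : Finset ℝ) (hS : ∀ s ∈ S, 0 ≤ s) (f : ℝ → ℝ) :
    ∃ (N : ℕ) (c t : ℕ → ℝ), (∀ k, 0 < t k) ∧
      ∀ s ∈ S, f s = ∑ k ∈ Finset.range N, c k * (1 / (1 + t k * s)) := by
  classical
  set N := S.card with hN
  set v : ℕ → ℝ := fun k => -((k : ℝ) + 1) with hv
  have hvi : Set.InjOn v (Finset.range N) := by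
    intro a _ b _ h
    simp only [hv] at h
    have : (a : ℝ) = b := by linarith
    exact_mod_cast this
  set D := Lagrange.nodal (Finset.range N) v with hD
  set p := Lagrange.interpolate S id (fun s => f s * D.eval s) with hp
  have hid : Set.InjOn (id : ℝ → ℝ) S := Function.injective_id.injOn
  have hdeg : p.degree < (Finset.range N).card := by
    rw [Finset.card_range]; exact Lagrange.degree_interpolate_lt _ hid
  refine ⟨N, fun k => Lagrange.nodalWeight (Finset.range N) v k * p.eval (v k) * (1 / ((k:ℝ)+1)),
    fun k => 1 / ((k:ℝ)+1), fun k => by positivity, fun s hs => ?_⟩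
  have h0 := hS s hs
  have hne : ∀ k ∈ Finset.range N, s ≠ v k := by
    intro k _ h
    have : (0:ℝ) ≤ k := k.cast_nonneg
    simp only [hv] at h
    linarith
  have h1 : p.eval s = f s * D.eval s := by
    have := Lagrange.eval_interpolate_at_node (fun s => f s * D.eval s) hid hs
    exact this
  have h2 := Lagrange.eq_interpolate hvi hdeg
  have h3 : p.eval s = D.eval s * ∑ k ∈ Finset.range N,
      Lagrange.nodalWeight (Finset.range N) v k * (s - v k)⁻¹ * p.eval (v k) := by
    conv_lhs => rw [h2]
    exact Lagrange.eval_interpolate_not_at_node _ hne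
  have hDne : D.eval s ≠ 0 := by
    rw [hD, Lagrange.eval_nodal]
    exact Finset.prod_ne_zero_iff.mpr fun k hk => sub_ne_zero.mpr (hne k hk)
  have h4 : f s = ∑ k ∈ Finset.range N,
      Lagrange.nodalWeight (Finset.range N) v k * (s - v k)⁻¹ * p.eval (v k) := by
    have : D.eval s * f s = D.eval s * _ := (mul_comm _ _).trans (h1.symm.trans h3)
    exact mul_left_cancel₀ hDne this
  rw [h4]
  refine Finset.sum_congr rfl fun k _ => ?_
  have hk : (0:ℝ) ≤ k := k.cast_nonneg
  simp only [hv, sub_neg_eq_add]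
  have e1 : s + ((k:ℝ)+1) ≠ 0 := by positivity
  have e2 : (1 + 1 / ((k:ℝ)+1) * s) ≠ 0 := by positivity
  have e3 : ((k:ℝ)+1) ≠ 0 := by positivity
  have : (s + ((k:ℝ)+1))⁻¹ = 1 / ((k:ℝ)+1) * (1 / (1 + 1 / ((k:ℝ)+1) * s)) := by
    field_simp
    ring
  rw [this]; ring

/-- scalar antiderivative -/
noncomputable def scalG (q p t : ℝ) : ℝ :=
  -(q - p) / (1 + t) - p * Real.log (1 + t) + p * Real.log (q + t * p)

lemma scalG_deriv {q p t : ℝ} (hq : 0 < q) (hp : 0 ≤ p) (ht : 0 ≤ t) :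
    HasDerivAt (scalG q p) ((q - p) ^ 2 / (q + t * p) / (1 + t) ^ 2) t := by
  have h1 : (1 + t) ≠ 0 := by positivity
  have h2 : q + t * p ≠ 0 := by positivity
  have d1 : HasDerivAt (fun t : ℝ => 1 + t) 1 t := (hasDerivAt_id t).const_add 1
  have d2 : HasDerivAt (fun t : ℝ => q + t * p) p t := by
    simpa using ((hasDerivAt_id t).mul_const p).const_add q
  have := (((hasDerivAt_const t (-(q-p))).div d1 h1).sub ((d1.log h1).const_mul p)).add
    ((d2.log h2).const_mul p)
  refine HasDerivAt.congr_deriv (f := scalG q p) this ?_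
  field_simp
  ring

lemma scalG_tendsto {q p : ℝ} (hq : 0 < q) (hp : 0 ≤ p) :
    Filter.Tendsto (scalG q p) Filter.atTop (nhds (p * Real.log p)) := by
  have t1 : Filter.Tendsto (fun t : ℝ => 1 + t) Filter.atTop Filter.atTop :=
    Filter.tendsto_atTop_add_const_left _ _ Filter.tendsto_id
  have t2 : Filter.Tendsto (fun t : ℝ => -(q - p) / (1 + t)) Filter.atTop (nhds 0) :=
    t1.const_div_atTop _
  rcases hp.eq_or_lt with h | h
  · subst h
    have : scalG q 0 = fun t => -(q - 0) / (1 + t) := by ext t; simp [scalG]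
    rw [this, zero_mul]
    exact t2
  · have t3 : Filter.Tendsto (fun t : ℝ => p + (q - p) / (1 + t)) Filter.atTop (nhds (p + 0)) :=
      (t1.const_div_atTop _).const_add p
    have t4 := ((t3.log (by simpa using h.ne')).const_mul p)
    have t5 := t2.add t4
    simp only [add_zero, zero_add] at t5
    refine t5.congr' ?_
    filter_upwards [Filter.eventually_ge_atTop 0] with t ht
    have h1 : (1 + t) ≠ 0 := by positivity
    have h2 : q + t * p ≠ 0 := by positivity
    have : p + (q - p) / (1 + t) = (q + t * p) / (1 + t) := by field_simp; ring
    rw [this, Real.log_div h2 h1, scalG]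
    ring

lemma scalG_zero (q p : ℝ) : scalG q p 0 = -(q - p) + p * Real.log q := by
  simp [scalG]

/-- a monotone-type argument replacing the integral representation -/
lemma deriv_zero_of_limits (H d : ℝ → ℝ) (hd : ∀ t, 0 ≤ t → HasDerivAt H (d t) t)
    (hpos : ∀ t, 0 < t → 0 ≤ d t)
    (hl : Filter.Tendsto H Filter.atTop (nhds (H 0))) : ∀ t, 0 < t → d t = 0 := by
  have mono : MonotoneOn H (Set.Ici 0) := by
    apply monotoneOn_of_deriv_nonneg (convex_Ici 0)
    · exact fun t ht => (hd t ht).continuousAt.continuousWithinAt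
    · intro t ht
      rw [interior_Ici] at ht
      exact (hd t (le_of_lt ht)).differentiableAt.differentiableWithinAt
    · intro t ht
      rw [interior_Ici] at ht
      rw [(hd t (le_of_lt ht)).deriv]; exact hpos t ht
  have hconst : ∀ t, 0 ≤ t → H t = H 0 := by
    intro t ht
    apply le_antisymm
    · refine ge_of_tendsto hl ?_
      filter_upwards [Filter.eventually_ge_atTop t] with s hs
      exact mono ht (ht.trans hs : (0:ℝ) ≤ s) hs
    · exact mono (Set.mem_Ici.mpr le_rfl) ht ht
  intro t ht
  have h1 : HasDerivAt H 0 t := by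
    refine (hasDerivAt_const t (H 0)).congr_of_eventuallyEq ?_
    filter_upwards [lt_mem_nhds ht] with s hs
    exact hconst s hs.le
  exact (hd t ht.le).unique h1

variable {n m r : Type*} [Fintype n] [DecidableEq n] [Fintype m] [DecidableEq m] [Fintype r]

/-- key identity -/
lemma key_identity (K : r → Matrix m n ℂ) (hK : ∑ i, (K i)ᴴ * K i = 1)
    (ρ σ X : Matrix n n ℂ) (ρ' σ' Y : Matrix m m ℂ) (t : ℝ)
    (hσ : σ.IsHermitian) (hρ : ρ.IsHermitian)
    (hσ' : σ' = ∑ i, K i * σ * (K i)ᴴ) (hρ' : ρ' = ∑ i, K i * ρ * (K i)ᴴ)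
    (hX : σ * X + (t : ℂ) • (X * ρ) = σ - ρ) (hY : σ' * Y + (t : ℂ) • (Y * ρ') = σ' - ρ') :
    (Xᴴ * (σ - ρ)).trace.re - (Yᴴ * (σ' - ρ')).trace.re =
      (∑ i, ((X * (K i)ᴴ - (K i)ᴴ * Y)ᴴ * σ * (X * (K i)ᴴ - (K i)ᴴ * Y)).trace.re) +
      t * ∑ i, ((K i * X - Y * K i) * ρ * (K i * X - Y * K i)ᴴ).trace.re := by
  -- expansions
  have a1 : ∑ i, (K i * Xᴴ * σ * X * (K i)ᴴ).trace = (Xᴴ * σ * X).trace := by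
    calc _ = ∑ i, ((K i)ᴴ * K i * (Xᴴ * σ * X)).trace := by
          refine Finset.sum_congr rfl fun i _ => ?_
          rw [Matrix.mul_assoc ((K i)ᴴ), Matrix.trace_mul_comm ((K i)ᴴ)]
          simp only [Matrix.mul_assoc]
      _ = _ := by rw [← Matrix.trace_sum, ← Finset.sum_mul, hK, Matrix.one_mul]
  have a2 : ∑ i, (K i * X * ρ * Xᴴ * (K i)ᴴ).trace = (Xᴴ * (X * ρ)).trace := by
    calc _ = ∑ i, ((K i)ᴴ * K i * (X * ρ * Xᴴ)).trace := by
          refine Finset.sum_congr rfl fun i _ => ?_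
          rw [Matrix.mul_assoc ((K i)ᴴ), Matrix.trace_mul_comm ((K i)ᴴ)]
          simp only [Matrix.mul_assoc]
      _ = _ := by
          rw [← Matrix.trace_sum, ← Finset.sum_mul, hK, Matrix.one_mul, Matrix.trace_mul_comm]
  have b1 : ∑ i, (Yᴴ * K i * σ * (K i)ᴴ * Y).trace = (Yᴴ * (σ' * Y)).trace := by
    rw [hσ', Finset.sum_mul, Finset.mul_sum, Matrix.trace_sum]
    simp only [Matrix.mul_assoc]
  have b2 : ∑ i, (Y * K i * ρ * (K i)ᴴ * Yᴴ).trace = (Yᴴ * (Y * ρ')).trace := by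
    rw [Matrix.trace_mul_comm, hρ', Finset.mul_sum, Finset.sum_mul, Matrix.trace_sum]
    simp only [Matrix.mul_assoc]
  have c0 : ∑ i, (Yᴴ * K i * (σ * X + (t : ℂ) • (X * ρ)) * (K i)ᴴ).trace
      = (Yᴴ * (σ' - ρ')).trace := by
    rw [hX, hσ', hρ', ← Finset.sum_sub_distrib, Finset.mul_sum, Matrix.trace_sum]
    simp only [Matrix.mul_assoc, Matrix.mul_sub, Matrix.sub_mul]
  have e1 : ∀ i, ((X * (K i)ᴴ - (K i)ᴴ * Y)ᴴ * σ * (X * (K i)ᴴ - (K i)ᴴ * Y)).trace.re =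
      (K i * Xᴴ * σ * X * (K i)ᴴ).trace.re + (Yᴴ * K i * σ * (K i)ᴴ * Y).trace.re
        - 2 * (Yᴴ * K i * (σ * X) * (K i)ᴴ).trace.re := by
    intro i
    have s : (K i * Xᴴ * σ * (K i)ᴴ * Y).trace.re = (Yᴴ * K i * (σ * X) * (K i)ᴴ).trace.re := by
      rw [← Complex.conj_re, ← Complex.star_def, ← Matrix.trace_conjTranspose]
      simp only [Matrix.conjTranspose_mul, Matrix.conjTranspose_conjTranspose, hσ.eq,
        Matrix.mul_assoc]
    simp only [Matrix.conjTranspose_sub, Matrix.conjTranspose_mul,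
      Matrix.conjTranspose_conjTranspose, Matrix.sub_mul, Matrix.mul_sub, Matrix.trace_sub,
      Complex.sub_re]
    simp only [← Matrix.mul_assoc] at s ⊢
    rw [s]; ring
  have e2 : ∀ i, ((K i * X - Y * K i) * ρ * (K i * X - Y * K i)ᴴ).trace.re =
      (K i * X * ρ * Xᴴ * (K i)ᴴ).trace.re + (Y * K i * ρ * (K i)ᴴ * Yᴴ).trace.re
        - 2 * (Yᴴ * K i * (X * ρ) * (K i)ᴴ).trace.re := by
    intro i
    have s1 : (K i * X * ρ * (K i)ᴴ * Yᴴ).trace.re = (Yᴴ * K i * (X * ρ) * (K i)ᴴ).trace.re := by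
      rw [Matrix.trace_mul_comm]
      simp only [Matrix.mul_assoc]
    have s2 : (Y * K i * ρ * Xᴴ * (K i)ᴴ).trace.re = (K i * X * ρ * (K i)ᴴ * Yᴴ).trace.re := by
      rw [← Complex.conj_re, ← Complex.star_def, ← Matrix.trace_conjTranspose]
      simp only [Matrix.conjTranspose_mul, Matrix.conjTranspose_conjTranspose, hρ.eq,
        Matrix.mul_assoc]
    simp only [Matrix.conjTranspose_sub, Matrix.conjTranspose_mul,
      Matrix.sub_mul, Matrix.mul_sub, Matrix.trace_sub, Complex.sub_re]
    simp only [← Matrix.mul_assoc] at s1 s2 ⊢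
    rw [s2, s1]; ring
  have c1 : (∑ i, (Yᴴ * K i * (σ * X) * (K i)ᴴ).trace.re)
      + t * ∑ i, (Yᴴ * K i * (X * ρ) * (K i)ᴴ).trace.re = (Yᴴ * (σ' - ρ')).trace.re := by
    rw [← c0, Complex.re_sum, Finset.mul_sum, ← Finset.sum_add_distrib]
    refine Finset.sum_congr rfl fun i _ => ?_
    rw [Matrix.mul_add, Matrix.add_mul, Matrix.trace_add, Complex.add_re, Matrix.mul_smul,
      Matrix.smul_mul, Matrix.trace_smul, smul_eq_mul, Complex.re_ofReal_mul]
  have x1 : (Xᴴ * (σ - ρ)).trace.re = (Xᴴ * σ * X).trace.re + t * (Xᴴ * (X * ρ)).trace.re := by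
    rw [← hX, Matrix.mul_add, Matrix.trace_add, Complex.add_re, Matrix.mul_smul,
      Matrix.trace_smul, smul_eq_mul, Complex.re_ofReal_mul, Matrix.mul_assoc]
  have y1 : (Yᴴ * (σ' - ρ')).trace.re = (Yᴴ * (σ' * Y)).trace.re + t * (Yᴴ * (Y * ρ')).trace.re := by
    rw [← hY, Matrix.mul_add, Matrix.trace_add, Complex.add_re, Matrix.mul_smul,
      Matrix.trace_smul, smul_eq_mul, Complex.re_ofReal_mul]
  simp only [e1, e2, Finset.sum_sub_distrib, Finset.sum_add_distrib, ← Finset.mul_sum,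
    ← Complex.re_sum] at *
  rw [a1, a2, b1, b2]
  linarith

/-- double spectral sum -/
noncomputable def dsum (U V : Matrix n n ℂ) (g : n → n → ℝ) : Matrix n n ℂ :=
  U * Matrix.of (fun j i => (g j i : ℂ) * (Uᴴ * V) j i) * Vᴴ

/-- spectral reconstruction -/
noncomputable def spec (U : Matrix n n ℂ) (q : n → ℝ) : Matrix n n ℂ :=
  U * Matrix.diagonal (fun i => (q i : ℂ)) * Uᴴ

lemma spec_mul (U : Matrix n n ℂ) (hU : Uᴴ * U = 1) (a b : n → ℝ) :
    spec U a * spec U b = spec U (fun i => a i * b i) := by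
  have : spec U a * spec U b = U * (Matrix.diagonal (fun i => (a i : ℂ)) * (Uᴴ * U) *
      Matrix.diagonal (fun i => (b i : ℂ))) * Uᴴ := by
    simp only [spec, Matrix.mul_assoc]
  rw [this, hU, Matrix.mul_one, Matrix.diagonal_mul_diagonal, spec]
  simp

lemma spec_herm (U : Matrix n n ℂ) (a : n → ℝ) : (spec U a).IsHermitian := by
  have h : star (fun i => (a i : ℂ)) = fun i => (a i : ℂ) := by ext i; simp
  simp only [Matrix.IsHermitian, spec, Matrix.conjTranspose_mul,
    Matrix.conjTranspose_conjTranspose, Matrix.diagonal_conjTranspose, Matrix.mul_assoc, h]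

lemma spec_mul_dsum (U V : Matrix n n ℂ) (hU : Uᴴ * U = 1) (a : n → ℝ) (g : n → n → ℝ) :
    spec U a * dsum U V g = dsum U V (fun j i => a j * g j i) := by
  have : spec U a * dsum U V g = U * (Matrix.diagonal (fun i => (a i : ℂ)) * ((Uᴴ * U) *
     Matrix.of (fun j i => (g j i : ℂ) * (Uᴴ * V) j i))) * Vᴴ := by
    simp only [spec, dsum, Matrix.mul_assoc]
  rw [this, hU, Matrix.one_mul, dsum]
  congr 2
  ext j i
  simp [Matrix.diagonal_mul, mul_assoc]

lemma dsum_mul_spec (U V : Matrix n n ℂ) (hV : Vᴴ * V = 1) (b : n → ℝ) (g : n → n → ℝ) :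
    dsum U V g * spec V b = dsum U V (fun j i => g j i * b i) := by
  have : dsum U V g * spec V b = U * ((Matrix.of (fun j i => (g j i : ℂ) * (Uᴴ * V) j i)) *
     (Vᴴ * V) * Matrix.diagonal (fun i => (b i : ℂ))) * Vᴴ := by
    simp only [spec, dsum, Matrix.mul_assoc]
  rw [this, hV, Matrix.mul_one, dsum]
  congr 2
  ext j i
  simp only [Matrix.mul_diagonal, Matrix.of_apply]
  push_cast
  ring

lemma dsum_one (U V : Matrix n n ℂ) (hU : U * Uᴴ = 1) (hV : V * Vᴴ = 1) :
    dsum U V (fun _ _ => 1) = 1 := by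
  have : (Matrix.of fun j i => ((1 : ℝ) : ℂ) * (Uᴴ * V) j i) = Uᴴ * V := by
    ext j i; simp
  rw [dsum, this, ← Matrix.mul_assoc, hU, Matrix.one_mul, hV]

lemma dsum_prod (U V : Matrix n n ℂ) (hU' : Uᴴ * U = 1) (hV' : Vᴴ * V = 1)
    (hU : U * Uᴴ = 1) (hV : V * Vᴴ = 1) (a b : n → ℝ) :
    spec U a * spec V b = dsum U V (fun j i => a j * b i) := by
  have := spec_mul_dsum U V hU' a (fun _ _ => 1)
  rw [dsum_one U V hU hV, Matrix.mul_one] at this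
  rw [this, dsum_mul_spec U V hV']
  simp

lemma dsum_congr (U V : Matrix n n ℂ) (g h : n → n → ℝ)
    (H : ∀ j i, (Uᴴ * V) j i ≠ 0 → g j i = h j i) : dsum U V g = dsum U V h := by
  unfold dsum
  congr 2
  ext j i
  by_cases hc : (Uᴴ * V) j i = 0
  · simp only [Matrix.of_apply, hc, mul_zero]
  · simp only [Matrix.of_apply, H j i hc]

lemma dsum_add (U V : Matrix n n ℂ) (g h : n → n → ℝ) :
    dsum U V (fun j i => g j i + h j i) = dsum U V g + dsum U V h := by
  unfold dsum
  rw [← Matrix.add_mul, ← Matrix.mul_add]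
  congr 2
  ext j i
  simp only [Matrix.of_apply, Matrix.add_apply]
  push_cast
  ring

lemma dsum_smul (U V : Matrix n n ℂ) (c : ℝ) (g : n → n → ℝ) :
    dsum U V (fun j i => c * g j i) = (c : ℂ) • dsum U V g := by
  unfold dsum
  rw [← Matrix.smul_mul, ← Matrix.mul_smul]
  congr 2
  ext j i
  simp only [Matrix.of_apply, Matrix.smul_apply, smul_eq_mul]
  push_cast
  ring

lemma dsum_trace (U V : Matrix n n ℂ) (hU : Uᴴ * U = 1) (hV : Vᴴ * V = 1) (g h : n → n → ℝ) :
    ((dsum U V g)ᴴ * dsum U V h).trace.re =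
      ∑ j, ∑ i, g j i * h j i * Complex.normSq ((Uᴴ * V) j i) := by
  have e : ((dsum U V g)ᴴ * dsum U V h).trace =
      ((Matrix.of (fun j i => (g j i : ℂ) * (Uᴴ * V) j i))ᴴ *
        (Matrix.of (fun j i => (h j i : ℂ) * (Uᴴ * V) j i))).trace := by
    set G := (Matrix.of (fun j i => (g j i : ℂ) * (Uᴴ * V) j i))
    set H := (Matrix.of (fun j i => (h j i : ℂ) * (Uᴴ * V) j i))
    have : (dsum U V g)ᴴ * dsum U V h = V * (Gᴴ * (Uᴴ * U) * H * Vᴴ) := by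
      simp only [dsum, Matrix.conjTranspose_mul, Matrix.conjTranspose_conjTranspose,
        Matrix.mul_assoc, G, H]
    rw [this, Matrix.trace_mul_comm, Matrix.mul_assoc _ Vᴴ V, hV, hU]
    simp only [Matrix.mul_one]
  rw [e, Matrix.trace, Complex.re_sum]
  generalize Uᴴ * V = C
  simp only [Matrix.diag_apply, Matrix.mul_apply, Complex.re_sum]
  rw [Finset.sum_comm]
  refine Finset.sum_congr rfl fun j _ => Finset.sum_congr rfl fun i _ => ?_
  simp only [Matrix.conjTranspose_apply, Matrix.of_apply, star_mul', Complex.star_def,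
    Complex.conj_ofReal]
  have : ((g j i : ℂ) * (starRingEnd ℂ) (C j i)) * ((h j i : ℂ) * C j i) =
      ((g j i * h j i * Complex.normSq (C j i) : ℝ) : ℂ) := by
    push_cast
    rw [Complex.normSq_eq_conj_mul_self]
    ring
  rw [this, Complex.ofReal_re]

lemma matFun_spec (A : Matrix n n ℂ) (hA : A.PosSemidef) :
    ∃ (U : Matrix n n ℂ) (q : n → ℝ), Uᴴ * U = 1 ∧ U * Uᴴ = 1 ∧ (∀ i, 0 ≤ q i) ∧
      A = spec U q ∧ ∀ f : ℝ → ℝ, matFun f A = spec U (fun i => f (q i)) := by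
  refine ⟨(hA.1.eigenvectorUnitary : Matrix n n ℂ), hA.1.eigenvalues, ?_, ?_,
    hA.eigenvalues_nonneg, ?_, ?_⟩
  · exact Unitary.coe_star_mul_self hA.1.eigenvectorUnitary
  · exact Unitary.coe_mul_star_self hA.1.eigenvectorUnitary
  · exact hA.1.spectral_theorem
  · intro f
    rw [matFun, dif_pos hA.1]
    rfl

/-- spectral data of a pair of density matrices -/
structure SPair (ρ σ U V : Matrix n n ℂ) (q p : n → ℝ) : Prop where
  hU : Uᴴ * U = 1
  hU' : U * Uᴴ = 1
  hV : Vᴴ * V = 1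
  hV' : V * Vᴴ = 1
  hq : ∀ i, 0 ≤ q i
  hp : ∀ i, 0 ≤ p i
  hσ : σ = spec U q
  hρ : ρ = spec V p
  mσ : ∀ f : ℝ → ℝ, matFun f σ = spec U (fun i => f (q i))
  mρ : ∀ f : ℝ → ℝ, matFun f ρ = spec V (fun i => f (p i))
  hs : ∀ j i, (Uᴴ * V) j i ≠ 0 → q j = 0 → p i = 0
  tσ : σ.trace = 1
  tρ : ρ.trace = 1

lemma supp_mul {k : Type*} (ρ σ : Matrix n n ℂ) (hsupp : ∀ v, σ *ᵥ v = 0 → ρ *ᵥ v = 0)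
    (M : Matrix n k ℂ) (h : σ * M = 0) : ρ * M = 0 := by
  ext a b
  have h1 : σ *ᵥ (fun x => M x b) = 0 := by
    ext x
    exact congrFun (congrFun h x) b
  exact congrFun (hsupp _ h1) a

lemma exists_spair (ρ σ : Matrix n n ℂ) (hρ : IsDensityMatrix ρ) (hσ : IsDensityMatrix σ)
    (hsupp : ∀ v, σ *ᵥ v = 0 → ρ *ᵥ v = 0) :
    ∃ U V q p, SPair ρ σ U V q p := by
  obtain ⟨U, q, hU, hU', hq, eσ, mσ⟩ := matFun_spec σ hσ.1
  obtain ⟨V, p, hV, hV', hp, eρ, mρ⟩ := matFun_spec ρ hρ.1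
  refine ⟨U, V, q, p, hU, hU', hV, hV', hq, hp, eσ, eρ, mσ, mρ, ?_, hσ.2, hρ.2⟩
  intro j i hc hqj
  set D := Matrix.diagonal (fun k => if q k = 0 then (1 : ℂ) else 0) with hD
  have h1 : σ * (U * D) = 0 := by
    have : σ * (U * D) = U * (Matrix.diagonal (fun i => (q i : ℂ)) * (Uᴴ * U) * D) := by
      rw [eσ]; simp only [spec, Matrix.mul_assoc]
    rw [this, hU, Matrix.mul_one, hD, Matrix.diagonal_mul_diagonal]
    have z : (Matrix.diagonal fun k => (q k : ℂ) * (if q k = 0 then (1 : ℂ) else 0)) = 0 := by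
      rw [← Matrix.diagonal_zero]
      congr 1
      ext k
      by_cases hk : q k = 0 <;> simp [hk]
    rw [z, Matrix.mul_zero]
  have h2 := supp_mul ρ σ hsupp _ h1
  have h3 : Vᴴ * (ρ * (U * D)) = Matrix.diagonal (fun i => (p i : ℂ)) * (Vᴴ * U) * D := by
    have : Vᴴ * (ρ * (U * D)) = (Vᴴ * V) * Matrix.diagonal (fun i => (p i : ℂ)) * (Vᴴ * U) * D := by
      rw [eρ]; simp only [spec, Matrix.mul_assoc]
    rw [this, hV, Matrix.one_mul]
  rw [h2, Matrix.mul_zero] at h3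
  have h4 := congrFun (congrFun h3 i) j
  rw [hD, Matrix.mul_diagonal, Matrix.diagonal_mul] at h4
  simp only [Matrix.zero_apply, hqj, if_true, mul_one] at h4
  have h5 : (Vᴴ * U) i j = star ((Uᴴ * V) j i) := by
    rw [← Matrix.conjTranspose_apply, Matrix.conjTranspose_mul, Matrix.conjTranspose_conjTranspose]
  rcases mul_eq_zero.mp h4.symm with h | h
  · exact_mod_cast h
  · rw [h5, star_eq_zero] at h
    exact absurd h hc

/-- ratio functional calculus -/
noncomputable def ratF (q p : n → ℝ) (f : ℝ → ℝ) : n → n → ℝ :=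
  fun j i => if q j = 0 then 0 else f (p i / q j)

noncomputable def fT (t y : ℝ) : ℝ := (1 - y) / (1 + t * y)

namespace SPair
variable {ρ σ U V : Matrix n n ℂ} {q p : n → ℝ}

lemma eq_dsum_left (S : SPair ρ σ U V q p) (a : n → ℝ) : spec U a = dsum U V (fun j _ => a j) := by
  have := spec_mul_dsum U V S.hU a (fun _ _ => 1)
  rw [dsum_one U V S.hU' S.hV', Matrix.mul_one] at this
  rw [this]; simp

lemma eq_dsum_right (S : SPair ρ σ U V q p) (b : n → ℝ) : spec V b = dsum U V (fun _ i => b i) := by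
  have := dsum_mul_spec U V S.hV b (fun _ _ => 1)
  rw [dsum_one U V S.hU' S.hV', Matrix.one_mul] at this
  rw [this]; simp

lemma sub_eq (S : SPair ρ σ U V q p) : σ - ρ = dsum U V (fun j i => q j - p i) := by
  have h1 := S.hσ.trans (S.eq_dsum_left q)
  have h2 := S.hρ.trans (S.eq_dsum_right p)
  rw [h1, h2, sub_eq_iff_eq_add, ← dsum_add]
  simp

lemma solves (S : SPair ρ σ U V q p) {t : ℝ} (ht : 0 ≤ t) :
    σ * dsum U V (ratF q p (fT t)) + (t : ℂ) • (dsum U V (ratF q p (fT t)) * ρ) = σ - ρ := by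
  rw [S.sub_eq]
  have h1 := spec_mul_dsum U V S.hU q (ratF q p (fT t))
  have h2 := dsum_mul_spec U V S.hV p (ratF q p (fT t))
  rw [← S.hσ] at h1
  rw [← S.hρ] at h2
  rw [h1, h2, ← dsum_smul, ← dsum_add]
  apply dsum_congr
  intro j i hc
  have h3 := S.hs j i hc
  have := S.hq j
  have := S.hp i
  by_cases h : q j = 0
  · simp [ratF, h, h3 h]
  · have hq : 0 < q j := lt_of_le_of_ne (S.hq j) (Ne.symm h)
    have : 0 < 1 + t * (p i / q j) := by positivity
    have : 0 < q j + t * p i := by positivity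
    simp only [ratF, h, if_false, fT]
    field_simp

lemma trace_eq (S : SPair ρ σ U V q p) (g : n → n → ℝ) :
    (dsum U V g).trace.re = ∑ j, ∑ i, g j i * Complex.normSq ((Uᴴ * V) j i) := by
  have := dsum_trace U V S.hU S.hV (fun _ _ => 1) g
  rw [dsum_one U V S.hU' S.hV', Matrix.conjTranspose_one, Matrix.one_mul] at this
  rw [this]; simp

lemma relEnt_eq (S : SPair ρ σ U V q p) :
    relEnt ρ σ * Real.log 2 = ∑ j, ∑ i, (p i * Real.log (p i) - p i * Real.log (q j) + (q j - p i))
      * Complex.normSq ((Uᴴ * V) j i) := by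
  have hl : Real.log 2 ≠ 0 := (Real.log_pos (by norm_num)).ne'
  have h0 : ∑ j, ∑ i, (q j - p i) * Complex.normSq ((Uᴴ * V) j i) = 0 := by
    rw [← S.trace_eq, ← S.sub_eq, Matrix.trace_sub, S.tσ, S.tρ]; simp
  have h1 : (ρ * mlog2 ρ).trace.re = ∑ j, ∑ i, (p i * Real.logb 2 (p i))
      * Complex.normSq ((Uᴴ * V) j i) := by
    rw [← S.trace_eq, ← S.eq_dsum_right (fun i => p i * Real.logb 2 (p i)), ← spec_mul V S.hV,
      ← S.hρ, ← S.mρ]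
    rfl
  have h2 : (ρ * mlog2 σ).trace.re = ∑ j, ∑ i, (Real.logb 2 (q j) * p i)
      * Complex.normSq ((Uᴴ * V) j i) := by
    rw [← S.trace_eq, ← dsum_prod U V S.hU S.hV S.hU' S.hV' (fun j => Real.logb 2 (q j)) p,
      ← S.hρ, ← S.mσ, Matrix.trace_mul_comm]
    rfl
  rw [relEnt, Complex.sub_re, h1, h2]
  simp only [add_mul _ _ (Complex.normSq _), Finset.sum_add_distrib]
  rw [h0, add_zero, ← Finset.sum_sub_distrib, Finset.sum_mul]
  refine Finset.sum_congr rfl fun j _ => ?_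
  rw [← Finset.sum_sub_distrib, Finset.sum_mul]
  refine Finset.sum_congr rfl fun i _ => ?_
  simp only [Real.logb]
  field_simp

lemma exists_H (S : SPair ρ σ U V q p) : ∃ (H : ℝ → ℝ) (L : ℝ),
    (∀ t, 0 ≤ t → HasDerivAt H
      (((dsum U V (ratF q p (fT t)))ᴴ * (σ - ρ)).trace.re / (1 + t) ^ 2) t) ∧
    Filter.Tendsto H Filter.atTop (nhds L) ∧ L - H 0 = relEnt ρ σ * Real.log 2 := by
  refine ⟨fun t => ∑ j, ∑ i, (if q j = 0 then 0 else scalG (q j) (p i) t)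
      * Complex.normSq ((Uᴴ * V) j i),
    ∑ j, ∑ i, (if q j = 0 then 0 else p i * Real.log (p i))
      * Complex.normSq ((Uᴴ * V) j i), ?_, ?_, ?_⟩
  · intro t ht
    rw [S.sub_eq, dsum_trace U V S.hU S.hV, Finset.sum_div]
    refine HasDerivAt.fun_sum fun j _ => ?_
    rw [Finset.sum_div]
    refine HasDerivAt.fun_sum fun i _ => ?_
    by_cases h : q j = 0
    · simp only [h, ratF, if_true, zero_mul, zero_div]
      exact hasDerivAt_const _ _
    · have hq : 0 < q j := lt_of_le_of_ne (S.hq j) (Ne.symm h)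
      have hp := S.hp i
      simp only [h, ratF, if_false]
      refine ((scalG_deriv hq hp ht).mul_const _).congr_deriv ?_
      have : 0 < 1 + t * (p i / q j) := by positivity
      have : 0 < q j + t * p i := by positivity
      simp only [fT]
      field_simp
  · refine tendsto_finsetSum _ fun j _ => tendsto_finsetSum _ fun i _ => ?_
    by_cases h : q j = 0
    · simp only [h, if_true, zero_mul]; exact tendsto_const_nhds
    · have hq : 0 < q j := lt_of_le_of_ne (S.hq j) (Ne.symm h)
      simp only [h, if_false]
      exact (scalG_tendsto hq (S.hp i)).mul_const _
  · rw [S.relEnt_eq, ← Finset.sum_sub_distrib]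
    refine Finset.sum_congr rfl fun j _ => ?_
    rw [← Finset.sum_sub_distrib]
    refine Finset.sum_congr rfl fun i _ => ?_
    by_cases hc : (Uᴴ * V) j i = 0
    · simp only [hc, Complex.normSq_zero, mul_zero, sub_zero]
    by_cases h : q j = 0
    · simp [h, S.hs j i hc h]
    · simp only [h, if_false, scalG_zero]
      ring

end SPair

lemma psd_zero {k : Type*} [Fintype k] (s : Matrix n n ℂ) (hs : s.IsHermitian)
    (Z : Matrix n k ℂ) : 0 ≤ (Zᴴ * (s * s) * Z).trace.re ∧
      ((Zᴴ * (s * s) * Z).trace.re = 0 → s * Z = 0) := by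
  have e : Zᴴ * (s * s) * Z = (s * Z)ᴴ * (s * Z) := by
    rw [Matrix.conjTranspose_mul, hs.eq]; simp only [Matrix.mul_assoc]
  rw [e]
  have h := (Matrix.posSemidef_conjTranspose_mul_self (s * Z)).trace_nonneg
  rw [Complex.le_def] at h
  refine ⟨h.1, fun h0 => ?_⟩
  rw [← Matrix.trace_conjTranspose_mul_self_eq_zero_iff]
  exact Complex.ext h0 h.2.symm

lemma psd_zero' {k : Type*} [Fintype k] (s : Matrix n n ℂ) (hs : s.IsHermitian)
    (Z : Matrix k n ℂ) : 0 ≤ (Z * (s * s) * Zᴴ).trace.re := by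
  have := (psd_zero s hs Zᴴ).1
  rwa [Matrix.conjTranspose_conjTranspose] at this

lemma ratF_congr (q p : n → ℝ) (f g : ℝ → ℝ)
    (h : ∀ j i, f (p i / q j) = g (p i / q j)) : ratF q p f = ratF q p g := by
  ext j i
  simp only [ratF, h]

lemma ratF_sum (U V : Matrix n n ℂ) (q p : n → ℝ) (N : ℕ) (c : ℕ → ℝ) (f : ℕ → ℝ → ℝ) :
    dsum U V (ratF q p (fun y => ∑ k ∈ Finset.range N, c k * f k y)) =
      ∑ k ∈ Finset.range N, (c k : ℂ) • dsum U V (ratF q p (f k)) := by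
  induction N with
  | zero =>
    simp only [Finset.range_zero, Finset.sum_empty]
    have := dsum_smul U V 0 (ratF q p (fun _ => 0))
    rw [Complex.ofReal_zero, zero_smul] at this
    rw [← this]
    congr 1
    ext j i
    simp [ratF]
  | succ N ih =>
    rw [Finset.sum_range_succ, ← ih, ← dsum_smul, ← dsum_add]
    congr 1
    ext j i
    by_cases h : q j = 0 <;> simp [ratF, h, Finset.sum_range_succ]

lemma gen_resolvent (U V : Matrix n n ℂ) (q p : n → ℝ) (t : ℝ) (ht : 0 < t)
    (hq : ∀ i, 0 ≤ q i) (hp : ∀ i, 0 ≤ p i) :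
    dsum U V (ratF q p (fun y => 1 / (1 + t * y))) =
      ((t / (1 + t) : ℝ) : ℂ) • dsum U V (ratF q p (fT t)) +
      ((1 / (1 + t) : ℝ) : ℂ) • dsum U V (ratF q p (fun _ => 1)) := by
  rw [← dsum_smul, ← dsum_smul, ← dsum_add]
  congr 1
  ext j i
  by_cases h : q j = 0
  · simp [ratF, h]
  · simp only [ratF, h, if_false, fT]
    have : 0 ≤ p i / q j := div_nonneg (hp i) (hq j)
    generalize p i / q j = y at *
    have : 0 < 1 + t * y := by positivity
    field_simp
    ring

lemma eq_of_limits (K : r → Matrix m n ℂ) (hK : ∑ i, (K i)ᴴ * K i = 1)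
    {ρ σ s w : Matrix n n ℂ} {ρ' σ' : Matrix m m ℂ}
    (hsh : s.IsHermitian) (hss : s * s = σ) (hwh : w.IsHermitian) (hww : w * w = ρ)
    (hσh : σ.IsHermitian) (hρh : ρ.IsHermitian)
    (hσ' : σ' = ∑ i, K i * σ * (K i)ᴴ) (hρ' : ρ' = ∑ i, K i * ρ * (K i)ᴴ)
    (X : ℝ → Matrix n n ℂ) (Y : ℝ → Matrix m m ℂ)
    (hX : ∀ t : ℝ, 0 ≤ t → σ * X t + (t : ℂ) • (X t * ρ) = σ - ρ)
    (hY : ∀ t : ℝ, 0 ≤ t → σ' * Y t + (t : ℂ) • (Y t * ρ') = σ' - ρ')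
    (H H' : ℝ → ℝ) (L L' : ℝ)
    (hd : ∀ t, 0 ≤ t → HasDerivAt H (((X t)ᴴ * (σ - ρ)).trace.re / (1 + t) ^ 2) t)
    (hd' : ∀ t, 0 ≤ t → HasDerivAt H' (((Y t)ᴴ * (σ' - ρ')).trace.re / (1 + t) ^ 2) t)
    (hl : Filter.Tendsto H Filter.atTop (nhds L))
    (hl' : Filter.Tendsto H' Filter.atTop (nhds L'))
    (hE : L - H 0 = L' - H' 0) (i : r) (t : ℝ) (ht : 0 < t) :
    s * (X t * (K i)ᴴ) = s * ((K i)ᴴ * Y t) := by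
  have key := fun t (ht : 0 ≤ t) => key_identity K hK ρ σ _ ρ' σ' _ t hσh hρh hσ' hρ'
    (hX t ht) (hY t ht)
  have n1 : ∀ t i, 0 ≤ ((X t * (K i)ᴴ - (K i)ᴴ * Y t)ᴴ * σ *
      (X t * (K i)ᴴ - (K i)ᴴ * Y t)).trace.re := by
    intro t i
    rw [← hss]
    exact (psd_zero s hsh _).1
  have n2 : ∀ t i, 0 ≤ ((K i * X t - Y t * K i) * ρ * (K i * X t - Y t * K i)ᴴ).trace.re := by
    intro t i
    rw [← hww]
    exact psd_zero' w hwh _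
  have hz := deriv_zero_of_limits (fun t => H t - H' t) _
    (fun t ht => (hd t ht).fun_sub (hd' t ht))
    (fun t ht => by
      rw [← sub_div, key t ht.le]
      have a1 := Finset.sum_nonneg (fun i (_ : i ∈ Finset.univ) => n1 t i)
      have a2 := Finset.sum_nonneg (fun i (_ : i ∈ Finset.univ) => n2 t i)
      exact div_nonneg (add_nonneg a1 (mul_nonneg ht.le a2)) (sq_nonneg _))
    (by
      have : L - L' = H 0 - H' 0 := by linarith
      rw [← this]
      exact hl.sub hl')
  have h1 := hz t ht
  rw [← sub_div, key t ht.le] at h1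
  have a1 := Finset.sum_nonneg (fun i (_ : i ∈ Finset.univ) => n1 t i)
  have a2 := Finset.sum_nonneg (fun i (_ : i ∈ Finset.univ) => n2 t i)
  have h2 : (1 + t) ^ 2 ≠ 0 := by positivity
  rw [div_eq_zero_iff, or_iff_left h2] at h1
  have h3 := (add_eq_zero_iff_of_nonneg a1 (mul_nonneg ht.le a2)).mp h1
  have h4 := (Finset.sum_eq_zero_iff_of_nonneg (fun i _ => n1 t i)).mp h3.1 i (Finset.mem_univ i)
  rw [← hss] at h4
  have h6 := (psd_zero s hsh _).2 h4
  rw [Matrix.mul_sub, sub_eq_zero] at h6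
  exact h6

namespace SPair
variable {ρ σ U V : Matrix n n ℂ} {q p : n → ℝ}

lemma sqrt_herm (S : SPair ρ σ U V q p) : (matFun Real.sqrt σ).IsHermitian := by
  rw [S.mσ]; exact spec_herm _ _

lemma sqrt_sq (S : SPair ρ σ U V q p) : matFun Real.sqrt σ * matFun Real.sqrt σ = σ := by
  rw [S.mσ, spec_mul U S.hU]
  conv_rhs => rw [S.hσ]
  congr 1; ext i; exact Real.mul_self_sqrt (S.hq i)

lemma sqrt_herm' (S : SPair ρ σ U V q p) : (matFun Real.sqrt ρ).IsHermitian := by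
  rw [S.mρ]; exact spec_herm _ _

lemma sqrt_sq' (S : SPair ρ σ U V q p) : matFun Real.sqrt ρ * matFun Real.sqrt ρ = ρ := by
  rw [S.mρ, spec_mul V S.hV]
  conv_rhs => rw [S.hρ]
  congr 1; ext i; exact Real.mul_self_sqrt (S.hp i)

end SPair

lemma intertwine_base (K : r → Matrix m n ℂ) (hK : ∑ i, (K i)ᴴ * K i = 1)
    {ρ σ U V : Matrix n n ℂ} {q p : n → ℝ} (S : SPair ρ σ U V q p)
    {ρ' σ' U' V' : Matrix m m ℂ} {q' p' : m → ℝ} (S' : SPair ρ' σ' U' V' q' p')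
    (hσ' : σ' = ∑ i, K i * σ * (K i)ᴴ) (hρ' : ρ' = ∑ i, K i * ρ * (K i)ᴴ)
    (hE : relEnt ρ σ = relEnt ρ' σ') (i : r) (t : ℝ) (ht : 0 < t) :
    matFun Real.sqrt σ * (dsum U V (ratF q p (fT t)) * (K i)ᴴ) =
      matFun Real.sqrt σ * ((K i)ᴴ * dsum U' V' (ratF q' p' (fT t))) := by
  obtain ⟨H, L, hd, hl, h0⟩ := S.exists_H
  obtain ⟨H', L', hd', hl', h0'⟩ := S'.exists_H
  have hσh : σ.IsHermitian := by rw [S.hσ]; exact spec_herm _ _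
  have hρh : ρ.IsHermitian := by rw [S.hρ]; exact spec_herm _ _
  exact eq_of_limits K hK S.sqrt_herm S.sqrt_sq S.sqrt_herm' S.sqrt_sq' hσh hρh hσ' hρ'
    (fun t => dsum U V (ratF q p (fT t))) (fun t => dsum U' V' (ratF q' p' (fT t)))
    (fun t ht => S.solves ht) (fun t ht => S'.solves ht) H H' L L' hd hd' hl hl'
    (by rw [h0, h0', hE]) i t ht

lemma intertwine (K : r → Matrix m n ℂ) (hK : ∑ i, (K i)ᴴ * K i = 1)
    {ρ σ U V : Matrix n n ℂ} {q p : n → ℝ} (S : SPair ρ σ U V q p)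
    {ρ' σ' U' V' : Matrix m m ℂ} {q' p' : m → ℝ} (S' : SPair ρ' σ' U' V' q' p')
    (hσ' : σ' = ∑ i, K i * σ * (K i)ᴴ) (hρ' : ρ' = ∑ i, K i * ρ * (K i)ᴴ)
    (hsk : ∀ i, matFun Real.sqrt σ * (K i)ᴴ = matFun Real.sqrt σ * (K i)ᴴ * suppProj σ')
    (hE : relEnt ρ σ = relEnt ρ' σ') (f : ℝ → ℝ) (i : r) :
    matFun Real.sqrt σ * (dsum U V (ratF q p f) * (K i)ᴴ) =
      matFun Real.sqrt σ * ((K i)ᴴ * dsum U' V' (ratF q' p' f)) := by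
  have base := intertwine_base K hK S S' hσ' hρ' hE i
  set s := matFun Real.sqrt σ with hs
  have one1 : s * dsum U V (ratF q p (fun _ => 1)) = s := by
    rw [hs, S.mσ, spec_mul_dsum U V S.hU, S.eq_dsum_left]
    congr 1
    ext j i
    by_cases h : q j = 0 <;> simp [ratF, h]
  have one2 : dsum U' V' (ratF q' p' (fun _ => 1)) = suppProj σ' := by
    rw [suppProj, S'.mσ, S'.eq_dsum_left]
    congr 1
  have base2 : ∀ t, 0 < t → s * (dsum U V (ratF q p (fun y => 1 / (1 + t * y))) * (K i)ᴴ) =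
      s * ((K i)ᴴ * dsum U' V' (ratF q' p' (fun y => 1 / (1 + t * y)))) := by
    intro t ht
    rw [gen_resolvent U V q p t ht S.hq S.hp, gen_resolvent U' V' q' p' t ht S'.hq S'.hp]
    have c1 : s * (dsum U V (ratF q p (fun _ => 1)) * (K i)ᴴ) =
        s * ((K i)ᴴ * dsum U' V' (ratF q' p' (fun _ => 1))) := by
      rw [← Matrix.mul_assoc, one1, one2, ← Matrix.mul_assoc]
      exact hsk i
    simp only [Matrix.add_mul, Matrix.mul_add, Matrix.smul_mul, Matrix.mul_smul, c1, base t ht]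
  classical
  set T : Finset ℝ := (Finset.univ.image fun x : n × n => p x.1 / q x.2) ∪
    (Finset.univ.image fun x : m × m => p' x.1 / q' x.2) with hT
  obtain ⟨N, c, t, ht, hf⟩ := cauchy_interp T (by
    intro y hy
    rw [hT, Finset.mem_union, Finset.mem_image, Finset.mem_image] at hy
    rcases hy with ⟨x, _, rfl⟩ | ⟨x, _, rfl⟩
    · exact div_nonneg (S.hp _) (S.hq _)
    · exact div_nonneg (S'.hp _) (S'.hq _)) f
  rw [ratF_congr q p f (fun y => ∑ k ∈ Finset.range N, c k * (1 / (1 + t k * y)))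
      (fun j i => hf _ (Finset.mem_union_left _ (Finset.mem_image.mpr ⟨(i, j), Finset.mem_univ _, rfl⟩))),
    ratF_congr q' p' f (fun y => ∑ k ∈ Finset.range N, c k * (1 / (1 + t k * y)))
      (fun j i => hf _ (Finset.mem_union_right _ (Finset.mem_image.mpr ⟨(i, j), Finset.mem_univ _, rfl⟩))),
    ratF_sum U V q p N c (fun k y => 1 / (1 + t k * y)),
    ratF_sum U' V' q' p' N c (fun k y => 1 / (1 + t k * y))]
  simp only [Matrix.sum_mul, Matrix.mul_sum, Matrix.smul_mul, Matrix.mul_smul]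
  exact Finset.sum_congr rfl fun k _ => by rw [base2 (t k) (ht k)]

lemma kraus_cp_s12 {k : Type*} [Fintype k] (Λ : Matrix n n ℂ →ₗ[ℂ] Matrix m m ℂ)
    (K : k → Matrix m n ℂ) (h : ∀ X, Λ X = ∑ i, K i * X * (K i)ᴴ) : IsCompletelyPositive Λ := by
  intro d M hM
  have : idTensor Λ M = ∑ i, ((1 : Matrix (Fin d) (Fin d) ℂ) ⊗ₖ K i) * M *
      ((1 : Matrix (Fin d) (Fin d) ℂ) ⊗ₖ K i)ᴴ := by
    ext ⟨a, b⟩ ⟨a', b'⟩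
    change Λ (Matrix.of fun x x' => M (a, x) (a', x')) b b' = _
    rw [h, Matrix.sum_apply, Matrix.sum_apply]
    refine Finset.sum_congr rfl fun i _ => ?_
    simp [Matrix.mul_apply, Fintype.sum_prod_type, Matrix.one_apply, Matrix.kroneckerMap_apply,
      apply_ite star, ite_mul, mul_ite, Finset.sum_ite_eq]
  rw [this]
  exact Matrix.posSemidef_sum _ fun i _ => hM.mul_mul_conjTranspose_same _

lemma exists_kraus (Λ : Matrix n n ℂ →ₗ[ℂ] Matrix m m ℂ) (h : IsCompletelyPositive Λ) :
    ∃ K : (Fin (Fintype.card n) × m) → Matrix m n ℂ, ∀ X, Λ X = ∑ i, K i * X * (K i)ᴴ := by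
  set e := Fintype.equivFin n
  set v : Fin (Fintype.card n) × n → ℂ := fun x => if e x.2 = x.1 then 1 else 0 with hv
  have hM := h _ _ (Matrix.posSemidef_vecMulVec_self_star v)
  set C := idTensor (α := Fin (Fintype.card n)) Λ (Matrix.vecMulVec v (star v)) with hC
  obtain ⟨U, q, hU, hU', hq, eC, -⟩ := matFun_spec C hM
  set s := spec U (fun i => Real.sqrt (q i)) with hs
  have hss : s * s = C := by
    rw [hs, spec_mul U hU, eC]
    congr 1; ext i; exact Real.mul_self_sqrt (hq i)
  have hsh : s.IsHermitian := spec_herm _ _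
  have hE : ∀ a a' b b', Λ (Matrix.single a a' 1) b b' = ∑ i, s (e a, b) i * star (s (e a', b') i) := by
    intro a a' b b'
    have h1 : Λ (Matrix.single a a' 1) b b' = C (e a, b) (e a', b') := by
      rw [hC]
      change _ = Λ (Matrix.of fun x x' => Matrix.vecMulVec v (star v) (e a, x) (e a', x')) b b'
      have : Matrix.single a a' (1 : ℂ) =
          Matrix.of fun x x' => Matrix.vecMulVec v (star v) (e a, x) (e a', x') := by
        ext x x'
        simp only [Matrix.of_apply, Matrix.vecMulVec_apply, hv, Pi.star_apply, Matrix.single_apply,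
          EmbeddingLike.apply_eq_iff_eq, eq_comm (a := x), eq_comm (a := x')]
        by_cases h1 : a = x <;> by_cases h2 : a' = x' <;> simp [h1, h2]
      rw [this]
    rw [h1, ← hss, Matrix.mul_apply]
    refine Finset.sum_congr rfl fun i _ => ?_
    rw [← Matrix.conjTranspose_apply, hsh.eq]
  refine ⟨fun i => Matrix.of fun b a => s (e a, b) i, fun X => ?_⟩
  conv_lhs => rw [Matrix.matrix_eq_sum_single X]
  ext b b'
  simp only [map_sum, Matrix.sum_apply]
  have h2 : ∀ a a', Λ (Matrix.single a a' (X a a')) b b' =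
      ∑ i, s (e a, b) i * X a a' * star (s (e a', b') i) := by
    intro a a'
    have : Matrix.single a a' (X a a') = X a a' • Matrix.single a a' (1 : ℂ) := by
      rw [Matrix.smul_single]; simp
    rw [this, map_smul, Matrix.smul_apply, hE, smul_eq_mul, Finset.mul_sum]
    exact Finset.sum_congr rfl fun i _ => by ring
  simp only [h2, Matrix.mul_apply, Matrix.of_apply, Matrix.conjTranspose_apply, Finset.sum_mul]
  rw [Finset.sum_comm]
  conv_rhs => rw [Finset.sum_comm]
  refine Finset.sum_congr rfl fun a' _ => ?_
  rw [Finset.sum_comm]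
end Helpers

/-- **Petz recovery.** The Petz map is completely positive, trace-preserving on the
support of `Γ[σ]`, recovers `σ` perfectly, and recovers any `ρ` (with
`supp ρ ⊆ supp σ`) perfectly whenever the data-processing inequality for the relative
entropy is saturated. -/
theorem petz_recovery {n m : Type*} [Fintype n] [DecidableEq n]
    [Fintype m] [DecidableEq m]
    (ρ σ : Matrix n n ℂ) (hρ : IsDensityMatrix ρ) (hσ : IsDensityMatrix σ)
    (hsupp : ∀ v, σ *ᵥ v = 0 → ρ *ᵥ v = 0)
    (Γ : Matrix n n ℂ →ₗ[ℂ] Matrix m m ℂ) (hΓ : IsQuantumChannel Γ)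
    (Γdag : Matrix m m ℂ →ₗ[ℂ] Matrix n n ℂ)
    (hdag : ∀ (X : Matrix m m ℂ) (Y : Matrix n n ℂ),
      (Xᴴ * Γ Y).trace = ((Γdag X)ᴴ * Y).trace) :
    IsCompletelyPositive (petzMap σ Γ Γdag) ∧
      (∀ τ : Matrix m m ℂ, suppProj (Γ σ) * τ * suppProj (Γ σ) = τ →
        (petzMap σ Γ Γdag τ).trace = τ.trace) ∧
      petzMap σ Γ Γdag (Γ σ) = σ ∧
      (relEnt ρ σ = relEnt (Γ ρ) (Γ σ) → petzMap σ Γ Γdag (Γ ρ) = ρ) := by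
  classical
  obtain ⟨K, hKr⟩ := exists_kraus Γ hΓ.1
  have hK : ∑ i, (K i)ᴴ * K i = 1 := by
    apply Matrix.ext_iff_trace_mul_right.mpr
    intro X
    rw [Matrix.one_mul, ← hΓ.2 X, hKr, Finset.sum_mul, Matrix.trace_sum, Matrix.trace_sum]
    refine Finset.sum_congr rfl fun i _ => ?_
    rw [Matrix.trace_mul_comm (K i * X), Matrix.mul_assoc]
  have hdagK : ∀ X, Γdag X = ∑ i, (K i)ᴴ * X * K i := by
    intro X
    have : (Γdag X)ᴴ = (∑ i, (K i)ᴴ * X * K i)ᴴ := by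
      apply Matrix.ext_iff_trace_mul_right.mpr
      intro Y
      rw [← hdag, hKr, Matrix.conjTranspose_sum, Finset.sum_mul, Finset.mul_sum,
        Matrix.trace_sum, Matrix.trace_sum]
      refine Finset.sum_congr rfl fun i _ => ?_
      rw [← Matrix.mul_assoc, Matrix.trace_mul_comm]
      simp only [Matrix.conjTranspose_mul, Matrix.conjTranspose_conjTranspose, Matrix.mul_assoc]
    exact Matrix.conjTranspose_injective this
  have hdens : ∀ τ, IsDensityMatrix τ → IsDensityMatrix (Γ τ) := by
    intro τ hτ
    refine ⟨?_, (hΓ.2 τ).trans hτ.2⟩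
    rw [hKr]
    exact Matrix.posSemidef_sum _ fun i _ => hτ.1.mul_mul_conjTranspose_same _
  obtain ⟨U, V, q, p, S⟩ := exists_spair ρ σ hρ hσ hsupp
  obtain ⟨U', q', hU, hU', hq', eσ', mσ'⟩ := matFun_spec (Γ σ) (hdens σ hσ).1
  have hsh := S.sqrt_herm
  have hss := S.sqrt_sq
  have hih : (invSqrt (Γ σ)).IsHermitian := by rw [invSqrt, mσ']; exact spec_herm _ _
  have hPh : (suppProj (Γ σ)).IsHermitian := by rw [suppProj, mσ']; exact spec_herm _ _
  have hPP : suppProj (Γ σ) * suppProj (Γ σ) = suppProj (Γ σ) := by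
    rw [suppProj, mσ', spec_mul _ hU]
    congr 1; ext i; by_cases h : q' i = 0 <;> simp [h]
  have hσP : Γ σ * suppProj (Γ σ) = Γ σ := by
    rw [suppProj, mσ']
    conv_rhs => rw [eσ']
    nth_rw 1 [eσ']
    rw [spec_mul _ hU]
    congr 1; ext i; by_cases h : q' i = 0 <;> simp [h]
  have hPσ : matFun (fun x => x⁻¹) (Γ σ) * Γ σ = suppProj (Γ σ) := by
    rw [suppProj, mσ', mσ']
    nth_rw 1 [eσ']
    rw [spec_mul _ hU]
    congr 1; ext i; by_cases h : q' i = 0 <;> simp [h]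
  have hiσi : invSqrt (Γ σ) * Γ σ * invSqrt (Γ σ) = suppProj (Γ σ) := by
    rw [suppProj, invSqrt, mσ', mσ']
    nth_rw 1 [eσ']
    rw [spec_mul _ hU, spec_mul _ hU]
    congr 1; ext i
    by_cases h : q' i = 0
    · simp [h]
    · have h1 : Real.sqrt (q' i) ≠ 0 := by
        rw [Real.sqrt_ne_zero (hq' i)]; exact h
      simp only [h, if_false]
      field_simp
      exact (Real.sq_sqrt (hq' i)).symm
  have hsk : ∀ i, matFun Real.sqrt σ * (K i)ᴴ =
      matFun Real.sqrt σ * (K i)ᴴ * suppProj (Γ σ) := by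
    have hsum : ∑ i, (((K i)ᴴ * (1 - suppProj (Γ σ)))ᴴ * σ *
        ((K i)ᴴ * (1 - suppProj (Γ σ)))).trace.re = 0 := by
      have e : ∑ i, ((K i)ᴴ * (1 - suppProj (Γ σ)))ᴴ * σ * ((K i)ᴴ * (1 - suppProj (Γ σ)))
          = (1 - suppProj (Γ σ))ᴴ * (Γ σ * (1 - suppProj (Γ σ))) := by
        conv_rhs => rw [hKr σ, Finset.sum_mul, Finset.mul_sum, ← hKr σ]
        refine Finset.sum_congr rfl fun i _ => ?_
        simp only [Matrix.conjTranspose_mul, Matrix.conjTranspose_conjTranspose, Matrix.mul_assoc]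
      rw [← Complex.re_sum, ← Matrix.trace_sum, e, Matrix.mul_sub (Γ σ), hσP, Matrix.mul_one,
        sub_self, Matrix.mul_zero]
      simp
    rw [← hss] at hsum
    intro i
    have h1 := (Finset.sum_eq_zero_iff_of_nonneg
      (fun i _ => (psd_zero _ hsh _).1)).mp hsum i (Finset.mem_univ i)
    have h2 := (psd_zero _ hsh _).2 h1
    rw [Matrix.mul_sub, Matrix.mul_sub, Matrix.mul_one, sub_eq_zero, ← Matrix.mul_assoc] at h2
    rw [hss] at h2
    exact h2
  have hpetz : ∀ τ, petzMap σ Γ Γdag τ = ∑ i,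
      (matFun Real.sqrt σ * (K i)ᴴ * invSqrt (Γ σ)) * τ *
        (matFun Real.sqrt σ * (K i)ᴴ * invSqrt (Γ σ))ᴴ := by
    intro τ
    change matFun Real.sqrt σ * Γdag (invSqrt (Γ σ) * τ * invSqrt (Γ σ)) * matFun Real.sqrt σ = _
    rw [hdagK, Finset.mul_sum, Finset.sum_mul]
    refine Finset.sum_congr rfl fun i _ => ?_
    simp only [Matrix.conjTranspose_mul, Matrix.conjTranspose_conjTranspose, hsh.eq, hih.eq,
      Matrix.mul_assoc]
  have hkey : ∀ A : Matrix m m ℂ, ∀ w : Matrix n n ℂ, ∀ τ : Matrix m m ℂ, w.IsHermitian →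
      (∀ i, matFun Real.sqrt σ * (K i)ᴴ * A = w * (K i)ᴴ) →
      invSqrt (Γ σ) * τ * invSqrt (Γ σ) = A * Aᴴ → petzMap σ Γ Γdag τ = w * w := by
    intro A w τ hw h1 h2
    rw [hpetz]
    have : ∀ i, (matFun Real.sqrt σ * (K i)ᴴ * invSqrt (Γ σ)) * τ *
        (matFun Real.sqrt σ * (K i)ᴴ * invSqrt (Γ σ))ᴴ = w * ((K i)ᴴ * K i) * w := by
      intro i
      calc _ = (matFun Real.sqrt σ * (K i)ᴴ) * (invSqrt (Γ σ) * τ * invSqrt (Γ σ)) *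
              (matFun Real.sqrt σ * (K i)ᴴ)ᴴ := by
            rw [Matrix.conjTranspose_mul _ (invSqrt (Γ σ)), hih.eq]
            simp only [Matrix.mul_assoc]
        _ = (matFun Real.sqrt σ * (K i)ᴴ * A) * (matFun Real.sqrt σ * (K i)ᴴ * A)ᴴ := by
            rw [h2, Matrix.conjTranspose_mul _ A]
            simp only [Matrix.mul_assoc]
        _ = _ := by
            rw [h1, Matrix.conjTranspose_mul, Matrix.conjTranspose_conjTranspose, hw.eq]
            simp only [Matrix.mul_assoc]
    simp only [this]
    rw [← Finset.sum_mul, ← Finset.mul_sum, hK, Matrix.mul_one]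
  refine ⟨kraus_cp_s12 _ _ hpetz, ?_, ?_, ?_⟩
  · intro τ hτ
    have hPτ : suppProj (Γ σ) * τ = τ := by
      have := congrArg (fun Z => suppProj (Γ σ) * Z) hτ
      simp only [← Matrix.mul_assoc, hPP] at this
      exact this.symm.trans hτ
    rw [hpetz, Matrix.trace_sum]
    have e : ∀ i, (matFun Real.sqrt σ * (K i)ᴴ * invSqrt (Γ σ) * τ *
        (matFun Real.sqrt σ * (K i)ᴴ * invSqrt (Γ σ))ᴴ).trace =
        (invSqrt (Γ σ) * (K i * σ * (K i)ᴴ) * invSqrt (Γ σ) * τ).trace := by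
      intro i
      rw [Matrix.trace_mul_comm]
      congr 1
      have e' : K i * σ * (K i)ᴴ = K i * (matFun Real.sqrt σ * matFun Real.sqrt σ) * (K i)ᴴ := by
        rw [hss]
      rw [e']
      simp only [Matrix.conjTranspose_mul, Matrix.conjTranspose_conjTranspose, hsh.eq, hih.eq,
        Matrix.mul_assoc]
    simp only [e]
    rw [← Matrix.trace_sum, ← Finset.sum_mul, ← Finset.sum_mul, ← Finset.mul_sum, ← hKr, hiσi, hPτ]
  · rw [hkey (suppProj (Γ σ)) (matFun Real.sqrt σ) (Γ σ) hsh (fun i => (hsk i).symm)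
      (by rw [hiσi, hPh.eq, hPP]), hss]
  · intro hE
    have hsupp' : ∀ v, Γ σ *ᵥ v = 0 → Γ ρ *ᵥ v = 0 := by
      intro v hv
      have h1 : suppProj (Γ σ) *ᵥ v = 0 := by
        rw [← hPσ, ← Matrix.mulVec_mulVec, hv, Matrix.mulVec_zero]
      have h2 : ∀ i, ρ *ᵥ ((K i)ᴴ *ᵥ v) = 0 := by
        intro i
        apply hsupp
        rw [← hss, ← Matrix.mulVec_mulVec, Matrix.mulVec_mulVec (M := matFun Real.sqrt σ) (N := (K i)ᴴ),
          hsk i, ← Matrix.mulVec_mulVec (N := suppProj (Γ σ)), h1, Matrix.mulVec_zero, Matrix.mulVec_zero]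
      rw [hKr, Matrix.sum_mulVec]
      refine Finset.sum_eq_zero fun i _ => ?_
      rw [← Matrix.mulVec_mulVec, ← Matrix.mulVec_mulVec, h2, Matrix.mulVec_zero]
    obtain ⟨U₁, V₁, q₁, p₁, S'⟩ := exists_spair (Γ ρ) (Γ σ) (hdens ρ hρ) (hdens σ hσ) hsupp'
    have hint := intertwine K hK S S' (hKr σ) (hKr ρ) hsk hE Real.sqrt
    have g1 : matFun Real.sqrt σ * dsum U V (ratF q p Real.sqrt) = matFun Real.sqrt ρ := by
      rw [S.mσ, S.mρ, spec_mul_dsum U V S.hU, S.eq_dsum_right]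
      apply dsum_congr
      intro j i hc
      by_cases h : q j = 0
      · simp [ratF, h, S.hs j i hc h]
      · have hqj : 0 < q j := lt_of_le_of_ne (S.hq j) (Ne.symm h)
        simp only [ratF, h, if_false]
        rw [← Real.sqrt_mul (S.hq j), mul_div_cancel₀ _ h]
    have g2 : dsum U₁ V₁ (ratF q₁ p₁ Real.sqrt) = invSqrt (Γ σ) * matFun Real.sqrt (Γ ρ) := by
      rw [invSqrt, S'.mσ, S'.mρ, dsum_prod U₁ V₁ S'.hU S'.hV S'.hU' S'.hV']
      congr 1
      ext j i
      by_cases h : q₁ j = 0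
      · simp [ratF, h]
      · simp only [ratF, h, if_false]
        rw [Real.sqrt_div (S'.hp i), div_eq_inv_mul]
    rw [hkey (invSqrt (Γ σ) * matFun Real.sqrt (Γ ρ)) (matFun Real.sqrt ρ) (Γ ρ) S.sqrt_herm'
      (fun i => by
        have := hint i
        rw [← Matrix.mul_assoc, g1, g2, ← Matrix.mul_assoc] at this
        exact this.symm)
      (by
        rw [Matrix.conjTranspose_mul, hih.eq, S'.sqrt_herm'.eq]
        conv_lhs => rw [← S'.sqrt_sq']
        simp only [Matrix.mul_assoc]), S.sqrt_sq']
end
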